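/- Let N ≥ 2, let Ω ⊆ ℝ^N be a nonempty open connected set, and let p, q > 0 satisfy pq > 1. Let u, v : ℝ^N → ℝ be twice continuously differentiable on Ω and suppose that for every compact set K ⊆ Ω there exists a constant C > 0 such that |Δu(x)| ≤ C·|v(x)|^q and |Δv(x)| ≤ C·|u(x)|^p for all x ∈ K. If there exists a point x₀ ∈ Ω at which both u and v vanish with infinite order, then u ≡ 0 and v ≡ 0 on Ω. -/

import Mathlib

/-!
Why the theorem holds. Everything rests on a Carleman estimate for the Laplacian with the weight
`|x|^(-2κ) exp(2|x|²)`, in which the factor `exp(2|x|²)` makes the power weight strictly convex.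
For a compactly supported `C²` function `w` that vanishes to infinite order at the origin together
with its gradient, and whose Laplacian satisfies `|Δw| ≤ B|x|^s`, it bounds
`∫ |x|^(-2s-N) w²` by a constant times `B²`, uniformly in `s ≥ 0` (`carleman`). Combined with a
local mean value inequality (`mean_value_ineq`) on a ball about `x` of radius comparable to
`|x| / (1+s)`, this gives `|w x| ≤ C (1+s)^N B |x|^s` with `C` depending on `N` only
(`pointwise_est`).

After a cut-off and a translation, `u` and `v` become such functions `U`, `V`. If `|V| ≤ A|x|^σ`,
then near the origin `|ΔU| ≤ C|V|^q ≤ C A^q |x|^(qσ)`, away from the origin `|ΔU|` is bounded, and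
the pointwise estimate bounds `U` by a multiple of `|x|^(qσ)`; repeating this for `V` gives a bound
by a multiple of `|x|^(pqσ)` (`double_step`). Since `pq > 1` the exponents `σ_k = (pq)^k` tend to
infinity, while the constants grow at most like `Λ^(σ_k)` because the losses `(1+σ_k)^M` are only
polynomial (`superexp_iteration`). So `|V| ≤ c (Λ|x|)^(σ_k)` for all `k`, and `V`, likewise `U`,
vanishes on the ball of radius `1/Λ` (`core`).

This radius depends only on bounds for `U` and `V` that are uniform over nearby centres
(`local_uniform`). Hence the set of points near which `u` and `v` both vanish is relatively closed
in `Ω`; it is open, and it contains `x₀` because the integral notion of infinite-order vanishing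
implies the pointwise one for Lipschitz functions (`flat_of_vanishesInfOrder`). Connectedness of
`Ω` concludes.
-/

open MeasureTheory Asymptotics Filter Metric Set

noncomputable def laplacian {N : ℕ} (u : EuclideanSpace ℝ (Fin N) → ℝ)
    (x : EuclideanSpace ℝ (Fin N)) : ℝ :=
  ∑ i : Fin N, iteratedFDeriv ℝ 2 u x ![EuclideanSpace.single i 1, EuclideanSpace.single i 1]

noncomputable def laplacianWithin {N : ℕ} (u : EuclideanSpace ℝ (Fin N) → ℝ)
    (s : Set (EuclideanSpace ℝ (Fin N))) (x : EuclideanSpace ℝ (Fin N)) : ℝ :=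
  ∑ i : Fin N, iteratedFDerivWithin ℝ 2 u s x ![EuclideanSpace.single i 1, EuclideanSpace.single i 1]

def VanishesInfOrder {N : ℕ} (w : EuclideanSpace ℝ (Fin N) → ℝ)
    (x₀ : EuclideanSpace ℝ (Fin N)) : Prop :=
  ∃ ε > (0:ℝ), ∀ m > (0:ℝ),
    (fun r : ℝ => ∫ x in ball x₀ r, |w x| ^ ε) =o[nhdsWithin 0 (Ioi 0)] fun r : ℝ => r ^ m

noncomputable def spow (t s : ℝ) : ℝ := Real.sign t * |t| ^ s

noncomputable def distToInt (x : ℝ) : ℝ := min (Int.fract x) (1 - Int.fract x)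

def IsRadial {N : ℕ} (u : EuclideanSpace ℝ (Fin N) → ℝ) : Prop :=
  ∃ U : ℝ → ℝ, ∀ x, u x = U ‖x‖

open scoped Topology

/-! ### Partial derivatives and integration by parts -/

/-- Euclidean space `ℝ^N`. -/
abbrev Euc (N : ℕ) := EuclideanSpace ℝ (Fin N)

/-- The `i`-th standard basis vector. -/
noncomputable abbrev bv {N : ℕ} (i : Fin N) : Euc N := EuclideanSpace.single i 1

/-- The partial derivative `∂ᵢw`. -/
noncomputable def pd {N : ℕ} (w : Euc N → ℝ) (i : Fin N) (x : Euc N) : ℝ := fderiv ℝ w x (bv i)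

/-- The second partial derivative `∂ᵢ∂ⱼw`, as the derivative in direction `i` of `∂ⱼw`. -/
noncomputable def pd2 {N : ℕ} (w : Euc N → ℝ) (i j : Fin N) (x : Euc N) : ℝ :=
  fderiv ℝ (fderiv ℝ w) x (bv i) (bv j)

section basics
variable {N : ℕ} {w : Euc N → ℝ}

lemma laplacian_eq_sum (w : Euc N → ℝ) (x : Euc N) : laplacian w x = ∑ i, pd2 w i i x := by
  simp [laplacian, pd2, iteratedFDeriv_two_apply, bv]

lemma hasLineDerivAt_of_contDiff (hw : ContDiff ℝ 2 w) (i : Fin N) (x : Euc N) :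
    HasLineDerivAt ℝ w (pd w i x) x (bv i) :=
  ((hw.differentiable (by norm_num)) x).hasFDerivAt.hasLineDerivAt _

lemma contDiff_fderiv (hw : ContDiff ℝ 2 w) : ContDiff ℝ 1 (fderiv ℝ w) :=
  hw.fderiv_right (by norm_num)

lemma hasLineDerivAt_pd (hw : ContDiff ℝ 2 w) (i j : Fin N) (x : Euc N) :
    HasLineDerivAt ℝ (pd w j) (pd2 w i j x) x (bv i) := by
  have h := (((contDiff_fderiv hw).differentiable (by norm_num)) x).hasFDerivAt
  have h2 := h.clm_apply (hasFDerivAt_const (bv j) x)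
  have h3 := h2.hasLineDerivAt (bv i)
  have h4 : HasLineDerivAt ℝ (pd w j) _ x (bv i) := h3
  simpa [pd2] using h4

lemma pd2_symm (hw : ContDiff ℝ 2 w) (i j : Fin N) (x : Euc N) : pd2 w i j x = pd2 w j i x :=
  (hw.contDiffAt.isSymmSndFDerivAt (by simp)) (bv i) (bv j)

lemma continuous_pd (hw : ContDiff ℝ 2 w) (i : Fin N) : Continuous (pd w i) :=
  (contDiff_fderiv hw).continuous.clm_apply continuous_const

lemma continuous_pd2 (hw : ContDiff ℝ 2 w) (i j : Fin N) : Continuous (pd2 w i j) :=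
  (((contDiff_fderiv hw).continuous_fderiv (by norm_num)).clm_apply
    continuous_const).clm_apply continuous_const

lemma continuous_laplacian (hw : ContDiff ℝ 2 w) : Continuous (laplacian w) := by
  have : laplacian w = fun x => ∑ i, pd2 w i i x := funext (laplacian_eq_sum w)
  rw [this]
  exact continuous_finsetSum _ fun i _ => continuous_pd2 hw i i

lemma fderiv_apply_eq_sum (w : Euc N → ℝ) (x y : Euc N) :
    fderiv ℝ w x y = ∑ i, y i * pd w i x := by
  have hy : y = ∑ i, y i • bv i := by
    ext j
    simp [bv, Pi.single_apply]
  conv_lhs => rw [hy]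
  simp [pd]

/-- The divergence theorem on the whole space for one component: an integrable directional derivative
of an integrable function has integral zero. -/
lemma integral_lineDeriv_eq_zero {f f' : Euc N → ℝ} {v : Euc N} (hf : Integrable f)
    (hf' : Integrable f') (h : ∀ x, HasLineDerivAt ℝ f (f' x) x v) : ∫ x, f' x = 0 := by
  have := integral_bilinear_hasLineDerivAt_right_eq_neg_left_of_integrable (μ := volume)
    (f := fun _ : Euc N => (1:ℝ)) (f' := fun _ => (0:ℝ)) (g := f) (g' := f') (v := v)
    (B := ContinuousLinearMap.mul ℝ ℝ) (by simp) (by simpa using hf') (by simpa using hf)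
    (fun x _ => by simpa using (hasFDerivAt_const (1:ℝ) x).hasLineDerivAt v) (fun x _ => h x)
  simpa using this

end basics

/-! ### A mean value inequality for functions with bounded Laplacian -/

section meanvalue
variable {N : ℕ}

/-- The averaging kernel `(1 - |y|²)₊`. It is chosen because `y ↦ -parab y • y` is the gradient of the
`C¹` function `parab² / 4`. -/
noncomputable def parab (y : Euc N) : ℝ := max 0 (1 - ‖y‖ ^ 2)

lemma continuous_parab : Continuous (parab (N := N)) := by unfold parab; fun_prop

lemma parab_nonneg (y : Euc N) : 0 ≤ parab y := le_max_left _ _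

lemma parab_eq_zero {y : Euc N} (hy : 1 ≤ ‖y‖) : parab y = 0 := by
  unfold parab
  apply max_eq_left
  nlinarith

lemma parab_le_one (y : Euc N) : parab y ≤ 1 := by
  unfold parab
  apply max_le zero_le_one
  nlinarith [norm_nonneg y]

lemma hasCompactSupport_parab : HasCompactSupport (parab (N := N)) := by
  apply HasCompactSupport.of_support_subset_isCompact (isCompact_closedBall (0 : Euc N) 1)
  intro y hy
  by_contra h
  apply hy
  apply parab_eq_zero
  simp at h
  exact h.le

lemma hasDerivAt_max_sq (s : ℝ) : HasDerivAt (fun s : ℝ => (max 0 s) ^ 2) (2 * max 0 s) s := by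
  rcases lt_trichotomy s 0 with h | h | h
  · rw [max_eq_left h.le]
    have : (fun s : ℝ => (max 0 s) ^ 2) =ᶠ[𝓝 s] fun _ => (0:ℝ) := by
      filter_upwards [gt_mem_nhds h] with r hr
      rw [max_eq_left hr.le]; simp
    simpa using (hasDerivAt_const s (0:ℝ)).congr_of_eventuallyEq this
  · subst h
    rw [hasDerivAt_iff_isLittleO]
    have h1 : (fun x' : ℝ => (max 0 x') ^ 2 - (max 0 (0:ℝ)) ^ 2 - (x' - 0) • (2 * max 0 (0:ℝ)))
        =O[𝓝 0] fun x' : ℝ => x' ^ 2 := by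
      apply IsBigO.of_bound 1
      filter_upwards with x
      simp only [max_self, smul_eq_mul, mul_zero, sub_zero, ne_eq, OfNat.ofNat_ne_zero,
        not_false_eq_true, zero_pow, Real.norm_eq_abs, abs_pow, one_mul]
      rcases le_total x 0 with hx | hx
      · rw [max_eq_left hx]; simp; positivity
      · rw [max_eq_right hx]
    refine h1.trans_isLittleO ?_
    simpa using (isLittleO_pow_id (𝕜 := ℝ) (n := 2) (by norm_num))
  · have : (fun s : ℝ => (max 0 s) ^ 2) =ᶠ[𝓝 s] fun s => s ^ 2 := by
      filter_upwards [lt_mem_nhds h] with r hr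
      rw [max_eq_right hr.le]
    rw [max_eq_right h.le]
    simpa using (hasDerivAt_pow 2 s).congr_of_eventuallyEq this

lemma hasLineDerivAt_normSq (i : Fin N) (x : Euc N) :
    HasLineDerivAt ℝ (fun y : Euc N => ‖y‖ ^ 2) (2 * x i) x (bv i) := by
  have := (hasStrictFDerivAt_norm_sq x).hasFDerivAt.hasLineDerivAt (bv i)
  simpa [bv, EuclideanSpace.inner_single_right] using this

lemma hasLineDerivAt_parab_sq (i : Fin N) (x : Euc N) :
    HasLineDerivAt ℝ (fun y : Euc N => parab y ^ 2 / 4) (-(x i * parab x)) x (bv i) := by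
  have h1 : HasDerivAt (fun t : ℝ => 1 - ‖x + t • bv i‖ ^ 2) (-(2 * x i)) 0 :=
    (hasLineDerivAt_normSq i x).const_sub 1
  have h2 := (HasDerivAt.comp_of_eq (0:ℝ) (hasDerivAt_max_sq (1 - ‖x‖ ^ 2)) h1 (by simp)).div_const 4
  have h3 : HasDerivAt (fun t : ℝ => parab (x + t • bv i) ^ 2 / 4)
    (2 * max 0 (1 - ‖x‖ ^ 2) * (-(2 * x i)) / 4) 0 := h2
  have : (-(x i * parab x)) = 2 * max 0 (1 - ‖x‖ ^ 2) * (-(2 * x i)) / 4 := by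
    unfold parab; ring
  rw [this]
  exact h3

/-- Chain rule for directional derivatives under the affine map `y ↦ x + s • y`. -/
lemma lineDeriv_comp_affine {f : Euc N → ℝ} {f' : ℝ} {x y v : Euc N} {s : ℝ}
    (h : HasLineDerivAt ℝ f f' (x + s • y) v) :
    HasLineDerivAt ℝ (fun y => f (x + s • y)) (s * f') y v := by
  unfold HasLineDerivAt at *
  have h1 : HasDerivAt (fun t : ℝ => s * t) s 0 := by
    simpa using (hasDerivAt_id (0:ℝ)).const_mul s
  have h2 := HasDerivAt.comp_of_eq (0:ℝ) h h1 (by simp)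
  rw [mul_comm]
  refine h2.congr_of_eventuallyEq (Eventually.of_forall fun t => ?_)
  simp only [Function.comp]
  congr 1
  rw [smul_add, smul_smul, add_assoc]

/-- Integration by parts against `parab² / 4`; summed over `i`, it turns the radial derivative of the
averages of `w` into an average of `Δw`. -/
lemma integral_pd_parab {w : Euc N → ℝ} (hw : ContDiff ℝ 2 w) (x : Euc N) (s : ℝ) (i : Fin N) :
    ∫ y, pd w i (x + s • y) * (y i * parab y) =
      s * ∫ y, pd2 w i i (x + s • y) * (parab y ^ 2 / 4) := by
  have c1 : Continuous fun y : Euc N => pd w i (x + s • y) :=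
    (continuous_pd hw i).comp (by fun_prop)
  have c2 : Continuous fun y : Euc N => pd2 w i i (x + s • y) :=
    (continuous_pd2 hw i i).comp (by fun_prop)
  have cp := continuous_parab (N := N)
  have ci : Continuous fun y : Euc N => y i := by fun_prop
  have hsp : HasCompactSupport fun y : Euc N => parab y ^ 2 / 4 := by
    have : (fun y : Euc N => parab y ^ 2 / 4) = fun y => parab y * (parab y / 4) := by
      ext y; ring
    rw [this]
    exact hasCompactSupport_parab.mul_right
  have i1 : Integrable fun y : Euc N => pd w i (x + s • y) * (y i * parab y) :=
    (c1.mul (ci.mul cp)).integrable_of_hasCompactSupport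
      ((hasCompactSupport_parab.mul_left (f := fun y : Euc N => y i)).mul_left)
  have i2 : Integrable fun y : Euc N => pd2 w i i (x + s • y) * (parab y ^ 2 / 4) :=
    (c2.mul (by fun_prop)).integrable_of_hasCompactSupport hsp.mul_left
  have i3 : Integrable fun y : Euc N => pd w i (x + s • y) * (parab y ^ 2 / 4) :=
    (c1.mul (by fun_prop)).integrable_of_hasCompactSupport hsp.mul_left
  have key := integral_lineDeriv_eq_zero (v := bv i) i3 ((i2.const_mul s).sub i1) (by
    intro y
    have h1 := lineDeriv_comp_affine (hasLineDerivAt_pd hw i i (x + s • y))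
    have h2 := hasLineDerivAt_parab_sq i y
    unfold HasLineDerivAt at *
    have h3 := h1.mul h2
    simp only [zero_smul, add_zero] at h3
    refine h3.congr_deriv ?_
    simp only [Pi.sub_apply]
    ring)
  have key2 := integral_sub (i2.const_mul s) i1
  rw [← integral_const_mul]
  simp only [Pi.sub_apply] at key
  linarith

/-- Local bound for `w x` by its `L¹` average over a ball and the size of `Δw` there. The kernel average
`s ↦ ∫ w (x + s y) parab y dy` equals `w x ∫ parab` at `s = 0`, and its derivative is
`s ∫ Δw (x + s y) parab² y / 4 dy`. -/
theorem mean_value_ineq (N : ℕ) : ∃ C > (0:ℝ), ∀ w : Euc N → ℝ, ContDiff ℝ 2 w →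
    HasCompactSupport w → ∀ (x : Euc N) (t S : ℝ), 0 < t →
    (∀ z ∈ closedBall x t, |laplacian w z| ≤ S) →
    |w x| ≤ C * ((t ^ N)⁻¹ * (∫ z in ball x t, |w z|) + t ^ 2 * S) := by
  have cp := continuous_parab (N := N)
  have hsp : HasCompactSupport fun y : Euc N => parab y ^ 2 / 4 := by
    have : (fun y : Euc N => parab y ^ 2 / 4) = fun y => parab y * (parab y / 4) := by
      ext y; ring
    rw [this]
    exact hasCompactSupport_parab.mul_right
  set Iη : ℝ := ∫ y : Euc N, parab y with hIη
  set IH : ℝ := ∫ y : Euc N, parab y ^ 2 / 4 with hIH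
  have intη : Integrable (parab (N := N)) := cp.integrable_of_hasCompactSupport hasCompactSupport_parab
  have intH : Integrable fun y : Euc N => parab y ^ 2 / 4 :=
    Continuous.integrable_of_hasCompactSupport (by fun_prop) hsp
  have hIηpos : 0 < Iη := by
    apply Continuous.integral_pos_of_hasCompactSupport_nonneg_nonzero cp hasCompactSupport_parab
      parab_nonneg (x := 0)
    simp [parab]
  have hIH0 : 0 ≤ IH := integral_nonneg fun y => by positivity
  refine ⟨(1 + IH) / Iη, by positivity, ?_⟩
  intro w hw hwc x t S ht hS
  have hS0 : 0 ≤ S := (abs_nonneg _).trans (hS x (by simp [ht.le]))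
  have hw' : ContDiff ℝ 1 w := hw.of_le (by norm_num)
  obtain ⟨K, hK⟩ := hwc.fderiv (𝕜 := ℝ) |>.exists_bound_of_continuous (hw'.continuous_fderiv (by norm_num))
  have cw : ∀ s : ℝ, Continuous fun y : Euc N => w (x + s • y) := fun s =>
    hw.continuous.comp (by fun_prop)
  have cdw : ∀ s : ℝ, Continuous fun y : Euc N => fderiv ℝ w (x + s • y) y := fun s =>
    ((hw'.continuous_fderiv (by norm_num)).comp (by fun_prop : Continuous fun y : Euc N => x + s • y)).clm_apply
      continuous_id
  have hder : ∀ s : ℝ, HasDerivAt (fun s : ℝ => ∫ y, w (x + s • y) * parab y)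
      (∫ y, fderiv ℝ w (x + s • y) y * parab y) s := by
    intro s
    refine (hasDerivAt_integral_of_dominated_loc_of_deriv_le (s := univ)
      (F := fun s y => w (x + s • y) * parab y)
      (F' := fun s y => fderiv ℝ w (x + s • y) y * parab y) (bound := fun y => K * parab y)
      univ_mem ?_ ?_ ?_ ?_ ?_ ?_).2
    · exact Eventually.of_forall fun s => ((cw s).mul cp).aestronglyMeasurable
    · exact ((cw s).mul cp).integrable_of_hasCompactSupport hasCompactSupport_parab.mul_left
    · exact ((cdw s).mul cp).aestronglyMeasurable
    · refine Eventually.of_forall fun y s _ => ?_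
      rw [norm_mul, Real.norm_of_nonneg (parab_nonneg y)]
      rcases le_total 1 ‖y‖ with hy | hy
      · rw [parab_eq_zero hy]; simp
      · apply mul_le_mul_of_nonneg_right _ (parab_nonneg y)
        have hK0 : 0 ≤ K := (norm_nonneg _).trans (hK x)
        calc ‖fderiv ℝ w (x + s • y) y‖ ≤ ‖fderiv ℝ w (x + s • y)‖ * ‖y‖ := ContinuousLinearMap.le_opNorm _ _
          _ ≤ K * 1 := mul_le_mul (hK _) hy (norm_nonneg _) hK0
          _ = K := mul_one K
    · exact intη.const_mul K
    · refine Eventually.of_forall fun y s _ => ?_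
      apply HasDerivAt.mul_const
      have h1 : HasDerivAt (fun s : ℝ => x + s • y) y s := by
        simpa using ((hasDerivAt_id s).smul_const y).const_add x
      exact ((hw.differentiable (by norm_num)) _).hasFDerivAt.comp_hasDerivAt s h1
  have hformula : ∀ s : ℝ, ∫ y, fderiv ℝ w (x + s • y) y * parab y =
      s * ∫ y, laplacian w (x + s • y) * (parab y ^ 2 / 4) := by
    intro s
    have e1 : ∀ y : Euc N, fderiv ℝ w (x + s • y) y * parab y =
        ∑ i, pd w i (x + s • y) * (y i * parab y) := by
      intro y
      rw [fderiv_apply_eq_sum, Finset.sum_mul]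
      exact Finset.sum_congr rfl fun i _ => by ring
    have e2 : ∀ y : Euc N, laplacian w (x + s • y) * (parab y ^ 2 / 4) =
        ∑ i, pd2 w i i (x + s • y) * (parab y ^ 2 / 4) := by
      intro y
      rw [laplacian_eq_sum, Finset.sum_mul]
    simp_rw [e1, e2]
    rw [integral_finsetSum, integral_finsetSum, Finset.mul_sum]
    · exact Finset.sum_congr rfl fun i _ => integral_pd_parab hw x s i
    · intro i _
      exact (((continuous_pd2 hw i i).comp (by fun_prop : Continuous fun y : Euc N => x + s • y)).mul
        (by fun_prop : Continuous fun y : Euc N => parab y ^ 2 / 4)).integrable_of_hasCompactSupport hsp.mul_left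
    · intro i _
      exact (((continuous_pd hw i).comp (by fun_prop : Continuous fun y : Euc N => x + s • y)).mul
        ((by fun_prop : Continuous fun y : Euc N => y i).mul cp)).integrable_of_hasCompactSupport
        ((hasCompactSupport_parab.mul_left (f := fun y : Euc N => y i)).mul_left)
  have hbd : ∀ s ∈ Icc 0 t, ‖∫ y, fderiv ℝ w (x + s • y) y * parab y‖ ≤ t * (S * IH) := by
    intro s hs
    rw [hformula, norm_mul, Real.norm_of_nonneg hs.1]
    apply mul_le_mul hs.2 _ (norm_nonneg _) ht.le
    rw [hIH, ← integral_const_mul]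
    apply norm_integral_le_of_norm_le (intH.const_mul S)
    refine Eventually.of_forall fun y => ?_
    rw [norm_mul, Real.norm_of_nonneg (by positivity : 0 ≤ parab y ^ 2 / 4)]
    rcases le_total 1 ‖y‖ with hy | hy
    · rw [parab_eq_zero hy]; simp
    · apply mul_le_mul_of_nonneg_right _ (by positivity)
      apply hS
      rw [mem_closedBall, dist_eq_norm, add_sub_cancel_left, norm_smul, Real.norm_of_nonneg hs.1]
      nlinarith [hs.1, hs.2, norm_nonneg y]
  have hMV : ‖(∫ y, w (x + t • y) * parab y) - (∫ y, w (x + (0:ℝ) • y) * parab y)‖ ≤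
      t * (S * IH) * ‖t - 0‖ :=
    (convex_Icc (0:ℝ) t).norm_image_sub_le_of_norm_hasDerivWithin_le
      (f := fun s : ℝ => ∫ y, w (x + s • y) * parab y)
      (fun s _ => (hder s).hasDerivWithinAt) hbd ⟨le_rfl, ht.le⟩ ⟨ht.le, le_rfl⟩
  have h0 : ∫ y, w (x + (0:ℝ) • y) * parab y = w x * Iη := by
    simp [integral_const_mul, hIη]
  have hφt : ‖∫ y, w (x + t • y) * parab y‖ ≤ (t ^ N)⁻¹ * ∫ z in ball x t, |w z| := by
    have e : (t ^ N)⁻¹ * ∫ z in ball x t, |w z| = ∫ y, (ball x t).indicator (fun z => |w z|) (x + t • y) := by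
      have h1 := Measure.integral_comp_smul (volume : Measure (Euc N))
        (fun y => (ball x t).indicator (fun z => |w z|) (x + y)) t
      rw [h1, integral_add_left_eq_self (μ := (volume : Measure (Euc N))) (fun y => (ball x t).indicator (fun z => |w z|) y),
        integral_indicator measurableSet_ball]
      simp [abs_of_pos ht]
    rw [e]
    apply norm_integral_le_of_norm_le
    · have hi : Integrable ((ball x t).indicator fun z => |w z|) :=
        ((hw.continuous.abs).integrable_of_hasCompactSupport hwc.norm).indicator measurableSet_ball
      exact (hi.comp_add_left x).comp_smul ht.ne'
    · refine Eventually.of_forall fun y => ?_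
      rw [norm_mul, Real.norm_of_nonneg (parab_nonneg y), Real.norm_eq_abs]
      by_cases hy : 1 ≤ ‖y‖
      · rw [parab_eq_zero hy, mul_zero]
        exact indicator_nonneg (fun _ _ => abs_nonneg _) _
      · push Not at hy
        rw [indicator_of_mem]
        · exact mul_le_of_le_one_right (abs_nonneg _) (parab_le_one y)
        · rw [mem_ball, dist_eq_norm, add_sub_cancel_left, norm_smul, Real.norm_of_nonneg ht.le]
          nlinarith
  rw [h0] at hMV
  have hfin : |w x| * Iη ≤ (t ^ N)⁻¹ * (∫ z in ball x t, |w z|) + IH * (t ^ 2 * S) := by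
    have h1 : |w x| * Iη = ‖w x * Iη‖ := by rw [norm_mul, Real.norm_of_nonneg hIηpos.le, Real.norm_eq_abs]
    have h2 := norm_sub_norm_le (w x * Iη) (∫ y, w (x + t • y) * parab y)
    rw [norm_sub_rev] at h2
    have h3 : ‖t - 0‖ = t := by simp [abs_of_pos ht]
    rw [h3] at hMV
    nlinarith
  have hA : 0 ≤ (t ^ N)⁻¹ * (∫ z in ball x t, |w z|) := (norm_nonneg _).trans hφt
  have hB : 0 ≤ t ^ 2 * S := by positivity
  rw [div_mul_eq_mul_div, le_div_iff₀ hIηpos]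
  nlinarith [mul_nonneg hIH0 hA]
end meanvalue

/-! ### Flat functions and the Carleman weight -/

section flat
variable {N : ℕ}

/-- `f` vanishes to infinite order at the origin in the pointwise sense: `f x = O(|x|^m)` for all `m`. -/
def Flat (f : Euc N → ℝ) : Prop := ∀ m : ℕ, f =O[𝓝 0] fun x => ‖x‖ ^ m

/-- Continuous functions supported in the closed ball of radius `1/2` about the origin and flat there. -/
structure FlatFun (f : Euc N → ℝ) : Prop where
  cont : Continuous f
  supp : ∀ x, 1 / 2 < ‖x‖ → f x = 0
  flat : Flat f

namespace FlatFun
variable {f g : Euc N → ℝ}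

lemma mul_cont (hf : FlatFun f) (hg : Continuous g) : FlatFun fun x => f x * g x where
  cont := hf.cont.mul hg
  supp x hx := by simp [hf.supp x hx]
  flat m := by
    have h1 : g =O[𝓝 0] fun _ => (1:ℝ) := hg.continuousAt.isBigO_one ℝ
    simpa using (hf.flat m).mul h1

lemma cont_mul (hf : FlatFun f) (hg : Continuous g) : FlatFun fun x => g x * f x := by
  simpa [mul_comm] using hf.mul_cont hg

lemma add (hf : FlatFun f) (hg : FlatFun g) : FlatFun fun x => f x + g x where
  cont := hf.cont.add hg.cont
  supp x hx := by simp [hf.supp x hx, hg.supp x hx]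
  flat m := (hf.flat m).add (hg.flat m)

lemma sub (hf : FlatFun f) (hg : FlatFun g) : FlatFun fun x => f x - g x where
  cont := hf.cont.sub hg.cont
  supp x hx := by simp [hf.supp x hx, hg.supp x hx]
  flat m := (hf.flat m).sub (hg.flat m)

lemma sum {ι : Type*} {s : Finset ι} {F : ι → Euc N → ℝ} (h : ∀ i, FlatFun (F i)) :
    FlatFun fun x => ∑ i ∈ s, F i x where
  cont := continuous_finsetSum _ fun i _ => (h i).cont
  supp x hx := by simp [fun i => (h i).supp x hx]
  flat m := IsBigO.fun_sum fun i _ => (h i).flat m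

lemma hasCompactSupport (hf : FlatFun f) : HasCompactSupport f := by
  apply HasCompactSupport.of_support_subset_isCompact (isCompact_closedBall (0 : Euc N) (1/2))
  intro y hy
  by_contra h
  apply hy
  apply hf.supp
  simpa using h

lemma bound (hf : FlatFun f) (m : ℕ) : ∃ C, 0 ≤ C ∧ ∀ x, |f x| ≤ C * ‖x‖ ^ m := by
  obtain ⟨c, hc0, hc⟩ := (hf.flat m).exists_nonneg
  rw [isBigOWith_iff] at hc
  obtain ⟨δ, hδ, hb⟩ := Metric.eventually_nhds_iff.1 hc
  obtain ⟨K, hK⟩ := hf.hasCompactSupport.exists_bound_of_continuous hf.cont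
  have hK0 : 0 ≤ K := (norm_nonneg _).trans (hK 0)
  refine ⟨c + K * (δ ^ m)⁻¹, by positivity, fun x => ?_⟩
  have hx0 : 0 ≤ ‖x‖ ^ m := by positivity
  rcases lt_or_ge ‖x‖ δ with h | h
  · have := hb (y := x) (by simpa using h)
    rw [Real.norm_eq_abs, Real.norm_of_nonneg hx0] at this
    have h2 : 0 ≤ K * (δ ^ m)⁻¹ * ‖x‖ ^ m := by positivity
    linarith
  · have h1 : |f x| ≤ K := hK x
    have h2 : δ ^ m ≤ ‖x‖ ^ m := pow_le_pow_left₀ hδ.le h m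
    have h3 : K ≤ K * (δ ^ m)⁻¹ * ‖x‖ ^ m := by
      rw [mul_assoc]
      apply le_mul_of_one_le_right hK0
      rw [inv_mul_eq_div, one_le_div (by positivity)]
      exact h2
    have h4 : 0 ≤ c * ‖x‖ ^ m := by positivity
    linarith

end FlatFun

/-- The Carleman weight `|x|^(-2κ) exp(2|x|²)`. For `κ > 0` its value at the origin is `0`, by the
conventions for real powers. -/
noncomputable def wt (κ : ℝ) (x : Euc N) : ℝ := (‖x‖ ^ 2) ^ (-κ) * Real.exp (2 * ‖x‖ ^ 2)

lemma wt_nonneg (κ : ℝ) (x : Euc N) : 0 ≤ wt κ x := by unfold wt; positivity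

lemma wt_zero {κ : ℝ} (hκ : 0 < κ) : wt κ (0 : Euc N) = 0 := by
  simp [wt, Real.zero_rpow (neg_ne_zero.2 hκ.ne')]

lemma measurable_wt (κ : ℝ) : Measurable (wt κ : Euc N → ℝ) := by
  unfold wt
  fun_prop

lemma wt_succ {κ : ℝ} (hκ : 0 < κ) (x : Euc N) : wt (κ + 1) x * ‖x‖ ^ 2 = wt κ x := by
  by_cases hx : x = 0
  · subst hx; simp [wt_zero hκ]
  · have : 0 < ‖x‖ ^ 2 := by positivity
    unfold wt
    have e : (‖x‖ ^ 2) ^ (-κ) = (‖x‖ ^ 2) ^ (-(κ + 1)) * ‖x‖ ^ 2 := by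
      rw [← Real.rpow_add_one this.ne']; congr 1; ring
    rw [e]; ring

lemma exp_half_le {x : Euc N} (hx : ‖x‖ ≤ 1 / 2) : Real.exp (2 * ‖x‖ ^ 2) ≤ 2 := by
  have h1 : 2 * ‖x‖ ^ 2 ≤ 1 / 2 := by nlinarith [norm_nonneg x]
  have h2 : Real.exp (2 * ‖x‖ ^ 2) ^ 2 ≤ 2 ^ 2 := by
    rw [← Real.exp_nat_mul]
    calc Real.exp (((2:ℕ):ℝ) * (2 * ‖x‖ ^ 2)) ≤ Real.exp 1 := by
          apply Real.exp_le_exp.2; push_cast; linarith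
      _ ≤ 2 ^ 2 := by linarith [Real.exp_one_lt_d9]
  exact (le_abs_self _).trans (abs_le_of_sq_le_sq h2 (by norm_num))

lemma FlatFun.wt_bound {f : Euc N → ℝ} (hf : FlatFun f) {κ : ℝ} (hκ : 0 < κ) :
    ∃ C, 0 ≤ C ∧ ∀ x, |wt κ x * f x| ≤ C * ‖x‖ ^ 2 := by
  obtain ⟨m, hm⟩ := exists_nat_ge (2 * κ)
  obtain ⟨C, hC0, hC⟩ := hf.bound (m + 2)
  refine ⟨2 * C, by positivity, fun x => ?_⟩
  by_cases hx : x = 0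
  · subst hx; simp [wt_zero hκ]
  rcases lt_or_ge (1/2) ‖x‖ with h | h
  · rw [hf.supp x h]; simp; positivity
  have hx0 : 0 < ‖x‖ := norm_pos_iff.2 hx
  rw [abs_mul, abs_of_nonneg (wt_nonneg κ x)]
  have h1 : (‖x‖ ^ 2) ^ (-κ) * ‖x‖ ^ m ≤ 1 := by
    have e1 : (‖x‖ ^ 2) ^ (-κ) = ‖x‖ ^ (-(2 * κ)) := by
      rw [← Real.rpow_natCast, ← Real.rpow_mul hx0.le]; congr 1; push_cast; ring
    rw [e1, ← Real.rpow_natCast, ← Real.rpow_add hx0]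
    exact Real.rpow_le_one hx0.le (by linarith) (by linarith)
  have h2 := exp_half_le h
  calc wt κ x * |f x| ≤ wt κ x * (C * ‖x‖ ^ (m + 2)) :=
        mul_le_mul_of_nonneg_left (hC x) (wt_nonneg κ x)
    _ = ((‖x‖ ^ 2) ^ (-κ) * ‖x‖ ^ m) * Real.exp (2 * ‖x‖ ^ 2) * (C * ‖x‖ ^ 2) := by
        unfold wt; ring
    _ ≤ 1 * 2 * (C * ‖x‖ ^ 2) := by gcongr
    _ = 2 * C * ‖x‖ ^ 2 := by ring

lemma FlatFun.integrable_wt {f : Euc N → ℝ} (hf : FlatFun f) {κ : ℝ} (hκ : 0 < κ) :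
    Integrable fun x => wt κ x * f x := by
  obtain ⟨C, hC0, hC⟩ := hf.wt_bound hκ
  have hi : Integrable ((closedBall (0 : Euc N) (1/2)).indicator fun _ => C) :=
    (integrable_indicator_iff measurableSet_closedBall).2
      (integrableOn_const (measure_closedBall_lt_top.ne))
  refine hi.mono' ((measurable_wt κ).mul hf.cont.measurable).aestronglyMeasurable
    (Eventually.of_forall fun x => ?_)
  by_cases hx : x ∈ closedBall (0 : Euc N) (1/2)
  · rw [indicator_of_mem hx, Real.norm_eq_abs]
    have : ‖x‖ ≤ 1/2 := by simpa using hx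
    refine (hC x).trans ?_
    have : ‖x‖ ^ 2 ≤ 1 := by nlinarith [norm_nonneg x]
    nlinarith
  · rw [indicator_of_notMem hx, hf.supp x (by simpa using hx)]; simp

lemma hasLineDerivAt_wt {κ : ℝ} {x : Euc N} (hx : x ≠ 0) (i : Fin N) :
    HasLineDerivAt ℝ (wt κ) (4 * x i * wt κ x - 2 * κ * (x i * wt (κ + 1) x)) x (bv i) := by
  have h0 := hasLineDerivAt_normSq i x
  unfold HasLineDerivAt at *
  have hp : 0 < ‖x‖ ^ 2 := by have := norm_pos_iff.2 hx; positivity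
  have h1 := h0.rpow_const (p := -κ) (Or.inl (by simpa using hx))
  have h2 := (h0.const_mul 2).exp
  have h3 := h1.mul h2
  refine h3.congr_deriv ?_
  simp only [zero_smul, add_zero, wt]
  rw [show -κ - 1 = -(κ + 1) by ring]
  ring

/-- The integral of `∂ᵢ(wt κ * f)` vanishes for flat `f`; flatness absorbs the singularity of the
weight at the origin. -/
lemma FlatFun.weighted_ibp {f f' : Euc N → ℝ} (hf : FlatFun f) (hf' : FlatFun f') {κ : ℝ}
    (hκ : 0 < κ) (i : Fin N) (hd : ∀ x, HasLineDerivAt ℝ f (f' x) x (bv i)) :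
    Integrable (fun x => wt κ x * (f' x + 4 * x i * f x) - 2 * κ * (wt (κ + 1) x * (x i * f x))) ∧
    ∫ x, (wt κ x * (f' x + 4 * x i * f x) - 2 * κ * (wt (κ + 1) x * (x i * f x))) = 0 := by
  have i1 : Integrable fun x => wt κ x * (f' x + 4 * x i * f x) :=
    (hf'.add (hf.cont_mul (by fun_prop))).integrable_wt hκ
  have i2 : Integrable fun x => 2 * κ * (wt (κ + 1) x * (x i * f x)) :=
    ((hf.cont_mul (by fun_prop)).integrable_wt (by positivity)).const_mul _
  refine ⟨i1.sub i2, integral_lineDeriv_eq_zero (v := bv i) (hf.integrable_wt hκ) (i1.sub i2) ?_⟩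
  intro x
  by_cases hx : x = 0
  · subst hx
    obtain ⟨C, hC0, hC⟩ := hf.wt_bound hκ
    simp only [wt_zero hκ, wt_zero (by positivity : 0 < κ + 1), zero_mul, mul_zero, sub_zero]
    unfold HasLineDerivAt
    rw [hasDerivAt_iff_isLittleO]
    have h1 : (fun t : ℝ => wt κ (0 + t • bv i) * f (0 + t • bv i)
        - wt κ ((0 : Euc N) + (0:ℝ) • bv i) * f (0 + (0:ℝ) • bv i) - (t - 0) • (0:ℝ))
        =O[𝓝 0] fun t : ℝ => t ^ 2 := by
      apply IsBigO.of_bound C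
      refine Eventually.of_forall fun t => ?_
      have := hC (0 + t • bv i)
      simpa [wt_zero hκ, norm_smul, bv, abs_mul] using this
    refine h1.trans_isLittleO ?_
    simpa using (isLittleO_pow_id (𝕜 := ℝ) (n := 2) (by norm_num))
  · have h1 := hasLineDerivAt_wt (κ := κ) hx i
    have h2 := hd x
    unfold HasLineDerivAt at *
    refine (h1.mul h2).congr_deriv ?_
    simp only [zero_smul, add_zero]
    ring

end flat

/-! ### The Carleman estimate -/

section carleman
variable {N : ℕ} {w : Euc N → ℝ}

/-- The Euler derivative `x · ∇w`. -/
noncomputable def eul (w : Euc N → ℝ) (x : Euc N) : ℝ := ∑ j, x j * pd w j x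

/-- The squared gradient `|∇w|²`. -/
noncomputable def gradSq (w : Euc N → ℝ) (x : Euc N) : ℝ := ∑ j, pd w j x * pd w j x

/-- The Euler derivative `x · ∇ψ` of the phase `ψ x = τ log |x| - |x|²`. When `2κ = 2τ + N` the weight
is `wt κ x = |x|^(-N) exp(-2 ψ x)`. -/
noncomputable def psi1 (τ : ℝ) (x : Euc N) : ℝ := τ - 2 * ‖x‖ ^ 2

/-- The coefficient of the positive square in the Carleman identity. -/
noncomputable def coefA (τ : ℝ) (x : Euc N) : ℝ := 2 * psi1 τ x + N - 2

/-- The coefficient of the zeroth-order term `w² x / 2` in the vector field `field`. -/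
noncomputable def coefC (τ : ℝ) (x : Euc N) : ℝ := -4 * ‖x‖ ^ 2 + coefA τ x * psi1 τ x

/-- The `i`-th component of the Rellich-type vector field
`|x|² (x·∇w) ∇w - ½ |x|² |∇w|² x - |x|² psi1 w ∇w + ½ coefC w² x`, whose weighted divergence is
computed in `sum_identity`. -/
noncomputable def field (τ : ℝ) (w : Euc N → ℝ) (i : Fin N) (x : Euc N) : ℝ :=
  ‖x‖ ^ 2 * eul w x * pd w i x - 1 / 2 * (‖x‖ ^ 2 * gradSq w x * x i)
    - ‖x‖ ^ 2 * psi1 τ x * w x * pd w i x + 1 / 2 * (coefC τ x * (w x * w x) * x i)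

/-- The expanded form of `∂ᵢ (field τ w i)`, see `hasLineDerivAt_field`. -/
noncomputable def field' (τ : ℝ) (w : Euc N → ℝ) (i : Fin N) (x : Euc N) : ℝ :=
  (2 * eul w x - 2 * psi1 τ x * w x + 4 * ‖x‖ ^ 2 * w x + coefC τ x * w x) * (x i * pd w i x)
    + (‖x‖ ^ 2 - ‖x‖ ^ 2 * psi1 τ x) * (pd w i x * pd w i x)
    + (-gradSq w x + 1 / 2 * (-8 - 8 * psi1 τ x - 4 * coefA τ x) * (w x * w x)) * (x i * x i)
    + (‖x‖ ^ 2 * eul w x - ‖x‖ ^ 2 * psi1 τ x * w x) * pd2 w i i x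
    + ‖x‖ ^ 2 * (∑ j, x j * pd2 w i j x * pd w i x)
    - ‖x‖ ^ 2 * (∑ j, pd w j x * pd2 w i j x * x i)
    + (-(1 / 2) * ‖x‖ ^ 2 * gradSq w x + 1 / 2 * coefC τ x * (w x * w x))

lemma hasLineDerivAt_field (hw : ContDiff ℝ 2 w) (τ : ℝ) (i : Fin N) (x : Euc N) :
    HasLineDerivAt ℝ (field τ w i) (field' τ w i x) x (bv i) := by
  have hR := hasLineDerivAt_normSq i x
  have hW := hasLineDerivAt_of_contDiff hw i x
  have hg := fun j => hasLineDerivAt_pd hw i j x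
  have hx : ∀ j, HasLineDerivAt ℝ (fun y : Euc N => y j) (if j = i then 1 else 0) x (bv i) := by
    intro j
    have := ((EuclideanSpace.proj j : Euc N →L[ℝ] ℝ).hasFDerivAt (x := x)).hasLineDerivAt (bv i)
    simpa [bv, Pi.single_apply] using this
  unfold HasLineDerivAt at *
  have hE : HasDerivAt (fun t : ℝ => eul w (x + t • bv i)) (pd w i x + ∑ j, x j * pd2 w i j x) 0 := by
    have := HasDerivAt.fun_sum (u := Finset.univ) fun j _ => (hx j).mul (hg j)
    refine this.congr_deriv ?_
    simp [Finset.sum_add_distrib]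
  have hG : HasDerivAt (fun t : ℝ => gradSq w (x + t • bv i)) (2 * ∑ j, pd w j x * pd2 w i j x) 0 := by
    have := HasDerivAt.fun_sum (u := Finset.univ) fun j _ => (hg j).mul (hg j)
    refine this.congr_deriv ?_
    rw [Finset.mul_sum]
    refine Finset.sum_congr rfl fun j _ => ?_
    simp only [zero_smul, add_zero]; ring
  have hP : HasDerivAt (fun t : ℝ => psi1 τ (x + t • bv i)) (-4 * x i) 0 :=
    ((hR.const_mul 2).const_sub τ).congr_deriv (by ring)
  have hA : HasDerivAt (fun t : ℝ => coefA τ (x + t • bv i)) (-8 * x i) 0 :=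
    (((hP.const_mul 2).add_const _).sub_const _).congr_deriv (by ring)
  have hC : HasDerivAt (fun t : ℝ => coefC τ (x + t • bv i))
      (-8 * x i + (-8 * x i * psi1 τ x + coefA τ x * (-4 * x i))) 0 := by
    refine ((hR.const_mul (-4)).add (hA.mul hP)).congr_deriv ?_
    simp only [zero_smul, add_zero]; ring
  have h1 := (hR.mul hE).mul (hg i)
  have h2 := ((hR.mul hG).mul (hx i)).const_mul (1 / 2)
  have h3 := ((hR.mul hP).mul hW).mul (hg i)
  have h4 := ((hC.mul (hW.mul hW)).mul (hx i)).const_mul (1 / 2)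
  have h5 := ((h1.sub h2).sub h3).add h4
  refine h5.congr_deriv ?_
  simp only [zero_smul, add_zero, if_true, Pi.mul_apply, field', ← Finset.sum_mul]
  ring

/-- The Carleman identity: the divergence of `wt κ * field` is the weighted product of `|x|² Δw` with the
multiplier `x·∇w - psi1 w`, minus two nonnegative terms. -/
lemma sum_identity (hw : ContDiff ℝ 2 w) (τ : ℝ) {κ : ℝ} (hκ : 0 < κ) (hκτ : 2 * κ = 2 * τ + N)
    (x : Euc N) :
    ∑ i, (wt κ x * (field' τ w i x + 4 * x i * field τ w i x)
      - 2 * κ * (wt (κ + 1) x * (x i * field τ w i x))) =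
    wt κ x * (‖x‖ ^ 2 * laplacian w x * (eul w x - psi1 τ x * w x)
      - coefA τ x * (eul w x - psi1 τ x * w x) ^ 2
      - 2 * ‖x‖ ^ 2 * (coefA τ x + 2) * w x ^ 2) := by
  have hR : ∑ i, x i * x i = ‖x‖ ^ 2 := by
    rw [EuclideanSpace.norm_sq_eq]
    exact Finset.sum_congr rfl fun i _ => by rw [Real.norm_eq_abs, sq_abs, sq]
  have hQ : ∑ i, ∑ j, pd w j x * pd2 w i j x * x i = ∑ i, ∑ j, x j * pd2 w i j x * pd w i x := by
    rw [Finset.sum_comm]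
    refine Finset.sum_congr rfl fun i _ => Finset.sum_congr rfl fun j _ => ?_
    rw [pd2_symm hw j i]; ring
  have hS' : ∑ i, field' τ w i x =
      (2 * eul w x - 2 * psi1 τ x * w x + 4 * ‖x‖ ^ 2 * w x + coefC τ x * w x) * eul w x
    + (‖x‖ ^ 2 - ‖x‖ ^ 2 * psi1 τ x) * gradSq w x
    + (-gradSq w x + 1 / 2 * (-8 - 8 * psi1 τ x - 4 * coefA τ x) * (w x * w x)) * ‖x‖ ^ 2
    + (‖x‖ ^ 2 * eul w x - ‖x‖ ^ 2 * psi1 τ x * w x) * laplacian w x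
    + N * (-(1 / 2) * ‖x‖ ^ 2 * gradSq w x + 1 / 2 * coefC τ x * (w x * w x)) := by
    simp only [field', Finset.sum_add_distrib, Finset.sum_sub_distrib, ← Finset.mul_sum, hQ, hR,
      ← laplacian_eq_sum, Finset.sum_const, Finset.card_univ, Fintype.card_fin, nsmul_eq_mul]
    rw [← eul, ← gradSq]
    ring
  have hS : ∑ i, x i * field τ w i x = ‖x‖ ^ 2 * (eul w x ^ 2 - 1 / 2 * (‖x‖ ^ 2 * gradSq w x)
      - psi1 τ x * w x * eul w x + 1 / 2 * (coefC τ x * (w x * w x))) := by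
    have : ∀ i, x i * field τ w i x = (‖x‖ ^ 2 * eul w x - ‖x‖ ^ 2 * psi1 τ x * w x) * (x i * pd w i x)
        + (-(1 / 2) * ‖x‖ ^ 2 * gradSq w x + 1 / 2 * (coefC τ x * (w x * w x))) * (x i * x i) := by
      intro i; unfold field; ring
    simp only [this, Finset.sum_add_distrib, ← Finset.mul_sum, hR]
    rw [← eul]
    ring
  have e : ∀ i, (wt κ x * (field' τ w i x + 4 * x i * field τ w i x)
      - 2 * κ * (wt (κ + 1) x * (x i * field τ w i x))) =
      wt κ x * field' τ w i x + (4 * wt κ x - 2 * κ * wt (κ + 1) x) * (x i * field τ w i x) := by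
    intro i; ring
  simp only [e, Finset.sum_add_distrib, ← Finset.mul_sum]
  rw [hS, hS']
  have hw1 : ∀ S : ℝ, (4 * wt κ x - 2 * κ * wt (κ + 1) x) * (‖x‖ ^ 2 * S) =
      wt κ x * (4 * ‖x‖ ^ 2 - 2 * κ) * S := by
    intro S
    have := wt_succ hκ x
    linear_combination (-(2 * κ) * S) * this
  rw [hw1, hκτ]
  unfold coefC coefA psi1
  ring

lemma flatFun_pd (hw : ContDiff ℝ 2 w) (hs : ∀ x, 1 / 2 < ‖x‖ → w x = 0)
    (hfl : ∀ i, Flat (pd w i)) (i : Fin N) : FlatFun (pd w i) where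
  cont := continuous_pd hw i
  supp x hx := by
    have : w =ᶠ[𝓝 x] fun _ => (0:ℝ) := by
      filter_upwards [(isOpen_lt continuous_const continuous_norm).mem_nhds hx] with y hy
      exact hs y hy
    simp [pd, this.fderiv_eq]
  flat := hfl i

lemma laplacian_supp (hs : ∀ x, 1 / 2 < ‖x‖ → w x = 0) (x : Euc N) (hx : 1 / 2 < ‖x‖) :
    laplacian w x = 0 := by
  have : w =ᶠ[𝓝 x] fun _ => (0:ℝ) := by
    filter_upwards [(isOpen_lt continuous_const continuous_norm).mem_nhds hx] with y hy
    exact hs y hy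
  rw [laplacian_eq_sum]
  apply Finset.sum_eq_zero
  intro i _
  have h2 := this.fderiv (𝕜 := ℝ)
  simp [pd2, h2.fderiv_eq]

lemma flatFun_field (hw : ContDiff ℝ 2 w) (nw : FlatFun w) (ng : ∀ i, FlatFun (pd w i)) (τ : ℝ)
    (i : Fin N) : FlatFun (field τ w i) ∧ FlatFun (field' τ w i) := by
  have nE : FlatFun (eul w) := FlatFun.sum fun j => (ng j).cont_mul (by fun_prop)
  have nG : FlatFun (gradSq w) := FlatFun.sum fun j => (ng j).cont_mul (ng j).cont
  have cP : Continuous (psi1 (N := N) τ) := by unfold psi1; fun_prop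
  have cA : Continuous (coefA (N := N) τ) := by unfold coefA; fun_prop
  have cC : Continuous (coefC (N := N) τ) := by unfold coefC; fun_prop
  have cR : Continuous fun x : Euc N => ‖x‖ ^ 2 := by fun_prop
  have c2 := continuous_pd2 hw
  have cx : ∀ j, Continuous fun x : Euc N => x j := fun j => by fun_prop
  have nww : FlatFun fun x => w x * w x := nw.cont_mul nw.cont
  constructor
  · refine FlatFun.add (FlatFun.sub (FlatFun.sub ?_ ?_) ?_) ?_
    · exact (ng i).cont_mul (cR.mul nE.cont)
    · exact ((nG.cont_mul cR).mul_cont (cx i)).cont_mul continuous_const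
    · exact (ng i).cont_mul ((cR.mul cP).mul nw.cont)
    · exact ((nww.cont_mul cC).mul_cont (cx i)).cont_mul continuous_const
  · refine FlatFun.add (FlatFun.sub (FlatFun.add (FlatFun.add (FlatFun.add (FlatFun.add
      ?_ ?_) ?_) ?_) ?_) ?_) ?_
    · refine ((ng i).cont_mul (cx i)).cont_mul ?_
      have := nE.cont
      have := nw.cont
      fun_prop
    · exact ((ng i).cont_mul (ng i).cont).cont_mul (by fun_prop)
    · refine FlatFun.mul_cont ?_ ((cx i).mul (cx i))
      refine FlatFun.add ?_ (nww.cont_mul (by fun_prop))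
      simpa using nG.cont_mul (continuous_const (y := (-1:ℝ)))
    · exact ((nE.cont_mul cR).sub (nw.cont_mul (cR.mul cP))).mul_cont (c2 i i)
    · exact (FlatFun.sum fun j => (ng i).cont_mul ((cx j).mul (c2 i j))).cont_mul cR
    · exact (FlatFun.sum fun j => ((ng j).mul_cont (c2 i j)).mul_cont (cx i)).cont_mul cR
    · exact (nG.cont_mul (continuous_const.mul cR)).add (nww.cont_mul (continuous_const.mul cC))

/-- The exponent `N - 2` is below the dimension, so the singularity is integrable. -/
lemma integrable_riesz (hN : 2 ≤ N) :
    Integrable ((ball (0 : Euc N) 1).indicator fun x => ‖x‖ ^ (-((N:ℝ) - 2))) := by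
  rw [integrable_indicator_iff measurableSet_ball]
  refine integrableOn_ball_of_norm_le_rpow (C := 1) (α := (N:ℝ) - 2) ?_ ?_ ?_ ?_
  · simp
    omega
  · simp
  · refine Eventually.of_forall fun x => ?_
    rw [Real.norm_of_nonneg (by positivity), one_mul]
  · exact (measurable_norm.pow_const _).aestronglyMeasurable

/-- The weighted `L²` estimate. The identity `sum_identity` has integral zero; the product of `|x|² Δw`
with the multiplier is absorbed into the positive square by Young's inequality, and the remaining
term `|x|⁴ |Δw|² wt κ` is at most `2 B² |x|^(2-N)` on the support of `w`. -/
theorem carleman (hN : 2 ≤ N) (hw : ContDiff ℝ 2 w) (nw : FlatFun w)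
    (hfl : ∀ i, Flat (pd w i)) {s B : ℝ} (hs : 0 ≤ s)
    (hB : ∀ x, |laplacian w x| ≤ B * ‖x‖ ^ s) :
    ∫ x, wt (s + 1 + N / 2) x * (‖x‖ ^ 2 * w x ^ 2) ≤
      B ^ 2 * ∫ x in ball (0 : Euc N) 1, ‖x‖ ^ (-((N:ℝ) - 2)) := by
  have ng := flatFun_pd hw nw.supp hfl
  set κ : ℝ := s + 1 + N / 2 with hκdef
  have hκ : 0 < κ := by positivity
  set τ : ℝ := s + 1 with hτ
  have hκτ : 2 * κ = 2 * τ + N := by rw [hκdef]; ring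
  have hibp := fun i => (flatFun_field hw nw ng τ i).1.weighted_ibp (flatFun_field hw nw ng τ i).2 hκ i
    (hasLineDerivAt_field hw τ i)
  have hT0 := integral_finsetSum Finset.univ fun i _ => (hibp i).1
  have hTi := integrable_finsetSum Finset.univ fun i _ => (hibp i).1
  simp only [sum_identity hw τ hκ hκτ] at hT0 hTi
  rw [Finset.sum_eq_zero fun i _ => (hibp i).2] at hT0
  have iL : Integrable fun x => wt κ x * (‖x‖ ^ 2 * w x ^ 2) :=
    FlatFun.integrable_wt (f := fun x => ‖x‖ ^ 2 * w x ^ 2)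
      (by simpa [sq] using (nw.cont_mul nw.cont).cont_mul (by fun_prop : Continuous fun x : Euc N => ‖x‖ * ‖x‖)) hκ
  rw [← integral_indicator measurableSet_ball, ← integral_const_mul]
  have iR := (integrable_riesz hN).const_mul (B ^ 2)
  have key : ∫ x, wt κ x * (‖x‖ ^ 2 * laplacian w x * (eul w x - psi1 τ x * w x)
      - coefA τ x * (eul w x - psi1 τ x * w x) ^ 2
      - 2 * ‖x‖ ^ 2 * (coefA τ x + 2) * w x ^ 2) ≤
      ∫ x, (B ^ 2 * (ball (0 : Euc N) 1).indicator (fun x => ‖x‖ ^ (-((N:ℝ) - 2))) x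
        - wt κ x * (‖x‖ ^ 2 * w x ^ 2)) := by
    apply integral_mono hTi (iR.sub iL)
    intro x
    simp only [Pi.sub_apply]
    rcases lt_or_ge (1/2) ‖x‖ with h | h
    · have e1 : eul w x = 0 := by
        unfold eul; exact Finset.sum_eq_zero fun j _ => by rw [(ng j).supp x h, mul_zero]
      have e2 := nw.supp x h
      rw [e1, e2]
      simp only [mul_zero, sub_zero, ne_eq, OfNat.ofNat_ne_zero, not_false_eq_true, zero_pow]
      have : 0 ≤ (ball (0 : Euc N) 1).indicator (fun x => ‖x‖ ^ (-((N:ℝ) - 2))) x :=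
        indicator_nonneg (fun _ _ => by positivity) _
      exact mul_nonneg (sq_nonneg _) this
    · rw [indicator_of_mem (by simpa using (by linarith : ‖x‖ < 1) : x ∈ ball (0 : Euc N) 1)]
      have hR0 : 0 ≤ ‖x‖ ^ 2 := by positivity
      have hR : ‖x‖ ^ 2 ≤ 1 / 4 := by nlinarith [norm_nonneg x]
      have hN2 : (2:ℝ) ≤ N := by exact_mod_cast hN
      have hA : 1 ≤ coefA τ x := by unfold coefA psi1; linarith
      have hsing : wt κ x * (‖x‖ ^ 2 * laplacian w x) ^ 2 ≤ 2 * (B ^ 2 * ‖x‖ ^ (-((N:ℝ) - 2))) := by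
        by_cases hx : x = 0
        · subst hx; rw [wt_zero hκ]; simp; positivity
        have hx0 : 0 < ‖x‖ := norm_pos_iff.2 hx
        have hl : laplacian w x ^ 2 ≤ (B * ‖x‖ ^ s) ^ 2 := by
          rw [← sq_abs]; exact pow_le_pow_left₀ (abs_nonneg _) (hB x) 2
        have e : (‖x‖ ^ 2) ^ (-κ) * ((‖x‖ ^ 2) ^ 2 * (‖x‖ ^ s) ^ 2) = ‖x‖ ^ (-((N:ℝ) - 2)) := by
          have a1 : (‖x‖ ^ 2) ^ (-κ) = ‖x‖ ^ (-(2 * κ)) := by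
            rw [← Real.rpow_natCast, ← Real.rpow_mul hx0.le]; congr 1; push_cast; ring
          have a2 : (‖x‖ ^ 2) ^ 2 = ‖x‖ ^ (4:ℝ) := by
            rw [← pow_mul, ← Real.rpow_natCast]; norm_num
          have a3 : (‖x‖ ^ s) ^ 2 = ‖x‖ ^ (2 * s) := by
            rw [← Real.rpow_natCast, ← Real.rpow_mul hx0.le]; congr 1; push_cast; ring
          rw [a1, a2, a3, ← Real.rpow_add hx0, ← Real.rpow_add hx0]
          congr 1
          rw [hκτ, hτ]; ring
        calc wt κ x * (‖x‖ ^ 2 * laplacian w x) ^ 2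
            = wt κ x * ((‖x‖ ^ 2) ^ 2 * laplacian w x ^ 2) := by ring
          _ ≤ wt κ x * ((‖x‖ ^ 2) ^ 2 * (B * ‖x‖ ^ s) ^ 2) := by
              have := wt_nonneg κ x
              gcongr
          _ = Real.exp (2 * ‖x‖ ^ 2) * (B ^ 2 * ((‖x‖ ^ 2) ^ (-κ) * ((‖x‖ ^ 2) ^ 2 * (‖x‖ ^ s) ^ 2))) := by
              unfold wt; ring
          _ ≤ 2 * (B ^ 2 * ‖x‖ ^ (-((N:ℝ) - 2))) := by
              rw [e]
              have := exp_half_le h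
              gcongr
      have hpt : ‖x‖ ^ 2 * laplacian w x * (eul w x - psi1 τ x * w x)
          - coefA τ x * (eul w x - psi1 τ x * w x) ^ 2
          - 2 * ‖x‖ ^ 2 * (coefA τ x + 2) * w x ^ 2 ≤
          1 / 4 * (‖x‖ ^ 2 * laplacian w x) ^ 2 - ‖x‖ ^ 2 * w x ^ 2 := by
        have q1 : 0 ≤ (1 / 2 * (‖x‖ ^ 2 * laplacian w x) - (eul w x - psi1 τ x * w x)) ^ 2 := sq_nonneg _
        have q2 : 0 ≤ (coefA τ x - 1) * (eul w x - psi1 τ x * w x) ^ 2 :=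
          mul_nonneg (by linarith) (sq_nonneg _)
        have q3 : 0 ≤ (2 * (coefA τ x + 2) - 1) * (‖x‖ ^ 2 * w x ^ 2) :=
          mul_nonneg (by linarith) (by positivity)
        nlinarith
      have := mul_le_mul_of_nonneg_left hpt (wt_nonneg κ x)
      have hpos : 0 ≤ B ^ 2 * ‖x‖ ^ (-((N:ℝ) - 2)) := by positivity
      nlinarith
  rw [hT0, integral_sub iR iL] at key
  linarith
end carleman

/-! ### From the Carleman estimate to pointwise decay -/

section estimate
variable {N : ℕ}

lemma one_add_rpow_le_exp {a e : ℝ} (ha : 0 ≤ a) (he : 0 ≤ e) : (1 + a) ^ e ≤ Real.exp (a * e) := by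
  rw [Real.exp_mul]
  exact Real.rpow_le_rpow (by positivity) (by linarith [Real.add_one_le_exp a]) he

lemma volume_real_ball (x : Euc N) {t : ℝ} (ht : 0 < t) :
    volume.real (ball x t) = t ^ N * volume.real (ball (0 : Euc N) 1) := by
  rw [measureReal_def, Measure.addHaar_ball_of_pos _ _ ht, ENNReal.toReal_mul,
    ENNReal.toReal_ofReal (by positivity), finrank_euclideanSpace_fin, measureReal_def]

/-- A flat `w` with `|Δw| ≤ B|x|^s` decays at the same rate, with a constant that grows only polynomially
in `s`. The mean value inequality is used on the ball about `x` of radius `|x| / (2(1+s))`, on which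
`|z|^s` and `|z|^(2s+N)` are comparable to their values at `x` uniformly in `s`. -/
theorem pointwise_est (hN : 2 ≤ N) : ∃ C > 0, ∀ w : Euc N → ℝ, ContDiff ℝ 2 w → FlatFun w →
    (∀ i, Flat (pd w i)) → ∀ s B : ℝ, 0 ≤ s → 0 < B → (∀ x, |laplacian w x| ≤ B * ‖x‖ ^ s) →
    ∀ x, |w x| ≤ C * (1 + s) ^ N * (B * ‖x‖ ^ s) := by
  obtain ⟨C0, hC0, hmv⟩ := mean_value_ineq N
  obtain ⟨I, hI⟩ : ∃ I : ℝ, I = ∫ x in ball (0 : Euc N) 1, ‖x‖ ^ (-((N:ℝ) - 2)) := ⟨_, rfl⟩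
  have hI0 : 0 ≤ I := hI ▸ integral_nonneg fun x => by positivity
  obtain ⟨V1, hV1⟩ : ∃ V1 : ℝ, V1 = volume.real (ball (0 : Euc N) 1) := ⟨_, rfl⟩
  have hV10 : 0 ≤ V1 := hV1 ▸ measureReal_nonneg
  refine ⟨C0 * (Real.exp N * I * 2 ^ N + V1 + Real.exp 1), by positivity, ?_⟩
  intro w hw nw hfl s B hs hB hlap x
  by_cases hx : x = 0
  · obtain ⟨c, _, hc⟩ := nw.bound 1
    have h1 := hc x
    have : |w x| ≤ 0 := by simpa [hx] using h1
    refine this.trans (by positivity)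
  rcases lt_or_ge (1/2) ‖x‖ with hxr | hxr
  · rw [nw.supp x hxr, abs_zero]; positivity
  set r : ℝ := ‖x‖ with hr
  have hr0 : 0 < r := norm_pos_iff.2 hx
  set a : ℝ := 1 / (2 * (1 + s)) with ha
  have ha0 : 0 < a := by positivity
  have ha2 : a * (2 * (1 + s)) = 1 := by rw [ha]; field_simp
  have ha1 : a ≤ 1 / 2 := by nlinarith
  set t : ℝ := r * a with ht
  have ht0 : 0 < t := by positivity
  set μ : ℝ := B * r ^ s with hμ
  have hμ0 : 0 < μ := by positivity
  have hnorm : ∀ z ∈ closedBall x t, 0 < ‖z‖ ∧ ‖z‖ ≤ r * (1 + a) := by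
    intro z hz
    have h1 : ‖z - x‖ ≤ t := by simpa [dist_eq_norm] using hz
    have h2 : ‖z‖ ≤ ‖x‖ + ‖z - x‖ := by simpa using norm_add_le x (z - x)
    have h3 : ‖x‖ ≤ ‖z‖ + ‖z - x‖ := by
      have := norm_sub_le z (z - x)
      simpa using this
    have h4 : t ≤ r * (1 / 2) := mul_le_mul_of_nonneg_left ha1 hr0.le
    constructor
    · linarith
    · rw [mul_add, mul_one]; linarith
  have hpow : ∀ z ∈ closedBall x t, ∀ e E : ℝ, 0 ≤ e → a * e ≤ E → ‖z‖ ^ e ≤ r ^ e * Real.exp E := by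
    intro z hz e E he hE
    obtain ⟨h1, h2⟩ := hnorm z hz
    calc ‖z‖ ^ e ≤ (r * (1 + a)) ^ e := Real.rpow_le_rpow h1.le h2 he
      _ = r ^ e * (1 + a) ^ e := Real.mul_rpow hr0.le (by positivity)
      _ ≤ r ^ e * Real.exp E := by
        gcongr
        exact (one_add_rpow_le_exp ha0.le he).trans (Real.exp_le_exp.2 hE)
  have hlapb : ∀ z ∈ closedBall x t, |laplacian w z| ≤ μ * Real.exp 1 := by
    intro z hz
    refine (hlap z).trans ?_
    rw [hμ, mul_assoc]
    exact mul_le_mul_of_nonneg_left (hpow z hz s 1 hs (by nlinarith)) hB.le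
  have hmain := hmv w hw nw.hasCompactSupport x t (μ * Real.exp 1) ht0 hlapb
  set κ : ℝ := s + 1 + N / 2 with hκdef
  have hκ : 0 < κ := by positivity
  have hcar : ∫ z, wt κ z * (‖z‖ ^ 2 * w z ^ 2) ≤ B ^ 2 * I := hI ▸ carleman hN hw nw hfl hs hlap
  have iL : Integrable fun x => wt κ x * (‖x‖ ^ 2 * w x ^ 2) :=
    FlatFun.integrable_wt (f := fun x => ‖x‖ ^ 2 * w x ^ 2)
      (by simpa [sq] using (nw.cont_mul nw.cont).cont_mul (by fun_prop : Continuous fun x : Euc N => ‖x‖ * ‖x‖)) hκ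
  have hN2 : (2:ℝ) ≤ N := by exact_mod_cast hN
  have hpt : ∀ z ∈ ball x t, |w z| ≤
      μ⁻¹ * (r ^ (2 * s + N) * Real.exp N) * (wt κ z * (‖z‖ ^ 2 * w z ^ 2)) + μ := by
    intro z hz
    have hz' := ball_subset_closedBall hz
    obtain ⟨h1, -⟩ := hnorm z hz'
    have h2 := hpow z hz' (2 * s + N) N (by positivity) (by nlinarith)
    have h3 : w z ^ 2 ≤ ‖z‖ ^ (2 * s + N) * (wt κ z * (‖z‖ ^ 2 * w z ^ 2)) := by
      have e : ‖z‖ ^ (2 * s + N) * ((‖z‖ ^ 2) ^ (-κ) * ‖z‖ ^ 2) = 1 := by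
        have a1 : (‖z‖ ^ 2) ^ (-κ) = ‖z‖ ^ (-(2 * κ)) := by
          rw [← Real.rpow_natCast, ← Real.rpow_mul h1.le]; congr 1; push_cast; ring
        have a2 : ‖z‖ ^ 2 = ‖z‖ ^ (2:ℝ) := by rw [← Real.rpow_natCast]; norm_num
        rw [a1, a2, ← Real.rpow_add h1, ← Real.rpow_add h1, hκdef]
        ring_nf
        simp
      have e2 : ‖z‖ ^ (2 * s + N) * (wt κ z * (‖z‖ ^ 2 * w z ^ 2)) =
          (‖z‖ ^ (2 * s + N) * ((‖z‖ ^ 2) ^ (-κ) * ‖z‖ ^ 2)) * Real.exp (2 * ‖z‖ ^ 2) * w z ^ 2 := by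
        unfold wt; ring
      rw [e2, e, one_mul]
      exact le_mul_of_one_le_left (sq_nonneg _) (Real.one_le_exp (by positivity))
    have hg0 : 0 ≤ wt κ z * (‖z‖ ^ 2 * w z ^ 2) := mul_nonneg (wt_nonneg _ _) (by positivity)
    have h4 : w z ^ 2 ≤ (r ^ (2 * s + N) * Real.exp N) * (wt κ z * (‖z‖ ^ 2 * w z ^ 2)) :=
      h3.trans (mul_le_mul_of_nonneg_right h2 hg0)
    have h5 : |w z| ≤ μ⁻¹ * w z ^ 2 + μ := by
      rw [← sq_abs]
      have : 0 ≤ μ⁻¹ * (|w z| - μ) ^ 2 := by positivity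
      have e : μ⁻¹ * (|w z| - μ) ^ 2 = μ⁻¹ * |w z| ^ 2 - 2 * |w z| + μ := by field_simp; ring
      have := abs_nonneg (w z)
      linarith
    refine h5.trans ?_
    rw [mul_assoc]
    gcongr
  have hInt : ∫ z in ball x t, |w z| ≤ μ * (Real.exp N * r ^ N * I + t ^ N * V1) := by
    have hvol : volume.real (ball x t) = t ^ N * V1 := by
      rw [hV1, volume_real_ball x ht0]
    have iC : IntegrableOn (fun _ : Euc N => μ) (ball x t) := integrableOn_const measure_ball_lt_top.ne
    calc ∫ z in ball x t, |w z|
        ≤ ∫ z in ball x t, (μ⁻¹ * (r ^ (2 * s + N) * Real.exp N) * (wt κ z * (‖z‖ ^ 2 * w z ^ 2)) + μ) := by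
          apply setIntegral_mono_on _ _ measurableSet_ball hpt
          · exact ((nw.cont.abs.integrable_of_hasCompactSupport nw.hasCompactSupport.abs)).integrableOn
          · exact (iL.const_mul _).integrableOn.add iC
      _ = μ⁻¹ * (r ^ (2 * s + N) * Real.exp N) * (∫ z in ball x t, wt κ z * (‖z‖ ^ 2 * w z ^ 2))
            + μ * (t ^ N * V1) := by
          rw [integral_add (iL.const_mul _).integrableOn iC, integral_const_mul, setIntegral_const,
            hvol, smul_eq_mul]
          ring
      _ ≤ μ⁻¹ * (r ^ (2 * s + N) * Real.exp N) * (B ^ 2 * I) + μ * (t ^ N * V1) := by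
          gcongr
          refine (setIntegral_le_integral iL (Eventually.of_forall fun z => ?_)).trans hcar
          exact mul_nonneg (wt_nonneg _ _) (by positivity)
      _ = μ * (Real.exp N * r ^ N * I + t ^ N * V1) := by
          have e1 : r ^ (2 * s + N) = (r ^ s) ^ 2 * r ^ N := by
            rw [Real.rpow_add hr0, Real.rpow_natCast, mul_comm 2 s, Real.rpow_mul hr0.le]
            norm_num
          have e2 : (r ^ s) ^ 2 * B ^ 2 = μ * μ := by rw [hμ]; ring
          have e3 : μ⁻¹ * (μ * μ) = μ := by field_simp
          rw [e1]
          linear_combination (μ⁻¹ * r ^ N * Real.exp N * I) * e2 + (r ^ N * Real.exp N * I) * e3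
  have hrt : (t ^ N)⁻¹ * r ^ N = 2 ^ N * (1 + s) ^ N := by
    rw [← mul_pow, ← inv_pow, ← mul_pow, ht, ha]
    congr 1
    field_simp
  have ht1 : t ^ 2 ≤ 1 := by
    have : t ≤ 1 := by nlinarith
    nlinarith
  have h1s : 1 ≤ (1 + s) ^ N := one_le_pow₀ (by linarith)
  calc |w x| ≤ C0 * ((t ^ N)⁻¹ * (∫ z in ball x t, |w z|) + t ^ 2 * (μ * Real.exp 1)) := hmain
    _ ≤ C0 * ((t ^ N)⁻¹ * (μ * (Real.exp N * r ^ N * I + t ^ N * V1)) + 1 * (μ * Real.exp 1)) := by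
        gcongr
    _ = C0 * (Real.exp N * I * 2 ^ N * (1 + s) ^ N + V1 * 1 + Real.exp 1 * 1) * μ := by
        have e4 : (t ^ N)⁻¹ * t ^ N = 1 := by field_simp
        linear_combination (C0 * μ * Real.exp N * I) * hrt + (C0 * μ * V1) * e4
    _ ≤ C0 * (Real.exp N * I * 2 ^ N * (1 + s) ^ N + V1 * (1 + s) ^ N + Real.exp 1 * (1 + s) ^ N) * μ := by
        gcongr
    _ = _ := by ring

/-- Flatness passes to the gradient: compare `w` at `x` and at `x + t eᵢ` with `t = |x|^m`, using that
`∇w` is Lipschitz. -/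
lemma flat_pd {w : Euc N → ℝ} (hw : ContDiff ℝ 2 w) (nw : FlatFun w) (i : Fin N) : Flat (pd w i) := by
  have h1 : ContDiff ℝ 1 (fderiv ℝ w) := contDiff_fderiv hw
  obtain ⟨L, hL⟩ := h1.lipschitzWith_of_hasCompactSupport (nw.hasCompactSupport.fderiv ℝ) (by norm_num)
  intro m
  obtain ⟨C, hC0, hC⟩ := nw.bound (2 * m)
  have hx1 : ∀ᶠ x : Euc N in 𝓝 0, ‖x‖ < 1 := by
    filter_upwards [ball_mem_nhds (0 : Euc N) one_pos] with x hx
    simpa using hx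
  by_cases hm : m = 0
  · subst hm
    simpa using (continuous_pd hw i).continuousAt.isBigO_one ℝ
  apply IsBigO.of_bound (C * 2 ^ (2 * m) + C + L)
  filter_upwards [hx1] with x hx
  rw [Real.norm_eq_abs, Real.norm_of_nonneg (by positivity)]
  by_cases h0 : x = 0
  · subst h0
    -- the derivative vanishes at the origin since `w = O(‖x‖²)`
    have hd : HasFDerivAt w (0 : Euc N →L[ℝ] ℝ) 0 := by
      rw [hasFDerivAt_iff_isLittleO_nhds_zero]
      obtain ⟨c, _, hc⟩ := nw.bound 2
      have hw0 : w 0 = 0 := by simpa using hc 0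
      have : (fun h : Euc N => w (0 + h) - w 0 - (0 : Euc N →L[ℝ] ℝ) h) =O[𝓝 0] fun h => ‖h‖ ^ 2 := by
        apply IsBigO.of_bound c
        exact Eventually.of_forall fun h => by simpa [hw0] using hc h
      exact this.trans_isLittleO (isLittleO_norm_pow_id one_lt_two)
    simp [pd, hd.fderiv, hm]
  have hr0 : 0 < ‖x‖ := norm_pos_iff.2 h0
  set t : ℝ := ‖x‖ ^ m with ht
  have ht0 : 0 < t := by positivity
  have htr : t ≤ ‖x‖ := by
    have := pow_le_pow_of_le_one hr0.le hx.le (Nat.one_le_iff_ne_zero.2 hm)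
    simpa using this
  have hrem : |w (x + t • bv i) - w x - fderiv ℝ w x (t • bv i)| ≤ L * t * t := by
    have hb : ‖t • (bv i : Euc N)‖ = t := by simp [norm_smul, bv, abs_of_pos ht0]
    have := (convex_closedBall x t).norm_image_sub_le_of_norm_fderiv_le'
      (f := w) (φ := fderiv ℝ w x) (C := L * t) (x := x) (y := x + t • bv i) (𝕜 := ℝ)
      (fun z _ => (hw.differentiable (by norm_num)).differentiableAt)
      (fun z hz => by
        have := hL.norm_sub_le z x
        refine this.trans ?_
        have hz' : ‖z - x‖ ≤ t := by simpa [dist_eq_norm] using hz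
        gcongr)
      (mem_closedBall_self ht0.le) (by simp [hb])
    simpa [hb] using this
  have hfd : fderiv ℝ w x (t • bv i) = t * pd w i x := by simp [pd]
  rw [hfd] at hrem
  have hxt : ‖x + t • bv i‖ ≤ 2 * ‖x‖ := by
    refine (norm_add_le _ _).trans ?_
    have hb : ‖t • (bv i : Euc N)‖ = t := by simp [norm_smul, bv, abs_of_pos ht0]
    rw [hb]; linarith
  have h2 : |w (x + t • bv i)| ≤ C * 2 ^ (2 * m) * (t * t) := by
    refine (hC _).trans ?_
    calc C * ‖x + t • bv i‖ ^ (2 * m) ≤ C * (2 * ‖x‖) ^ (2 * m) := by gcongr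
      _ = C * 2 ^ (2 * m) * (t * t) := by rw [mul_pow, ht]; ring
  have h3 : |w x| ≤ C * (t * t) := by
    refine (hC x).trans (le_of_eq ?_)
    rw [ht]; ring
  have h4 : t * |pd w i x| ≤ t * ((C * 2 ^ (2 * m) + C + L) * t) := by
    rw [← abs_of_pos ht0, ← abs_mul, abs_of_pos ht0]
    rw [abs_le] at *
    constructor <;> nlinarith
  exact le_of_mul_le_mul_left h4 ht0
end estimate

/-! ### Iteration of the decay rates -/

section iteration
variable {N : ℕ}

/-- Decay of `f` at rate `σ` gives decay of `w` at rate `qσ` when `|Δw| ≤ C|f|^q` near the origin. For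
`|x| ≥ ρ` the bound `|Δw| ≤ K ≤ K (|x|/ρ)^(qσ)` is used instead. -/
lemma half_step {w f : Euc N → ℝ} {CN C K ρ q : ℝ} (hC : 0 < C) (hK : 0 < K) (hρ : 0 < ρ)
    (hq : 0 < q)
    (hest : ∀ s B : ℝ, 0 ≤ s → 0 < B → (∀ x, |laplacian w x| ≤ B * ‖x‖ ^ s) →
      ∀ x, |w x| ≤ CN * (1 + s) ^ N * (B * ‖x‖ ^ s))
    (hwK : ∀ x, |laplacian w x| ≤ K) (hwf : ∀ x, ‖x‖ < ρ → |laplacian w x| ≤ C * |f x| ^ q)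
    {A σ : ℝ} (hA : 0 ≤ A) (hσ : 0 ≤ σ) (hf : ∀ x, |f x| ≤ A * ‖x‖ ^ σ) (x : Euc N) :
    |w x| ≤ CN * (1 + q * σ) ^ N * (C * A ^ q + K * ρ⁻¹ ^ (q * σ)) * ‖x‖ ^ (q * σ) := by
  have hB : 0 < C * A ^ q + K * ρ⁻¹ ^ (q * σ) := by positivity
  have := hest (q * σ) (C * A ^ q + K * ρ⁻¹ ^ (q * σ)) (by positivity) hB ?_ x
  · rwa [← mul_assoc] at this
  intro z
  rw [add_mul]
  rcases lt_or_ge ‖z‖ ρ with h | h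
  · have h1 : |f z| ^ q ≤ A ^ q * ‖z‖ ^ (q * σ) := by
      calc |f z| ^ q ≤ (A * ‖z‖ ^ σ) ^ q := Real.rpow_le_rpow (abs_nonneg _) (hf z) hq.le
        _ = A ^ q * ‖z‖ ^ (q * σ) := by
          rw [Real.mul_rpow hA (by positivity), ← Real.rpow_mul (norm_nonneg _), mul_comm σ]
    have h2 : 0 ≤ K * ρ⁻¹ ^ (q * σ) * ‖z‖ ^ (q * σ) := by positivity
    have h3 := (hwf z h).trans (mul_le_mul_of_nonneg_left h1 hC.le)
    linarith
  · have h1 : 0 ≤ C * A ^ q * ‖z‖ ^ (q * σ) := by positivity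
    have h2 : 1 ≤ ρ⁻¹ ^ (q * σ) * ‖z‖ ^ (q * σ) := by
      rw [← Real.mul_rpow (by positivity) (by positivity)]
      apply Real.one_le_rpow _ (by positivity)
      rwa [inv_mul_eq_div, one_le_div hρ]
    have h3 : K ≤ K * ρ⁻¹ ^ (q * σ) * ‖z‖ ^ (q * σ) := by
      rw [mul_assoc]; exact le_mul_of_one_le_right hK.le h2
    linarith [hwK z]

lemma add_rpow_le_two {a b p : ℝ} (ha : 0 ≤ a) (hb : 0 ≤ b) (hp : 0 ≤ p) :
    (a + b) ^ p ≤ 2 ^ p * (a ^ p + b ^ p) := by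
  have ha' : 0 ≤ a ^ p := by positivity
  have hb' : 0 ≤ b ^ p := by positivity
  rcases le_total a b with h | h
  · calc (a + b) ^ p ≤ (2 * b) ^ p := Real.rpow_le_rpow (by positivity) (by linarith) hp
      _ = 2 ^ p * b ^ p := Real.mul_rpow (by norm_num) hb
      _ ≤ _ := by gcongr; linarith
  · calc (a + b) ^ p ≤ (2 * a) ^ p := Real.rpow_le_rpow (by positivity) (by linarith) hp
      _ = 2 ^ p * a ^ p := Real.mul_rpow (by norm_num) ha
      _ ≤ _ := by gcongr; linarith

/-- Applying `half_step` to `U` and then to `V` multiplies the decay rate of `V` by `pq`. -/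
lemma double_step {U V : Euc N → ℝ} {CN C K ρ p q : ℝ} (hCN : 0 < CN) (hC : 0 < C) (hK : 0 < K)
    (hρ : 0 < ρ) (hp : 0 < p) (hq : 0 < q)
    (hestU : ∀ s B : ℝ, 0 ≤ s → 0 < B → (∀ x, |laplacian U x| ≤ B * ‖x‖ ^ s) →
      ∀ x, |U x| ≤ CN * (1 + s) ^ N * (B * ‖x‖ ^ s))
    (hestV : ∀ s B : ℝ, 0 ≤ s → 0 < B → (∀ x, |laplacian V x| ≤ B * ‖x‖ ^ s) →
      ∀ x, |V x| ≤ CN * (1 + s) ^ N * (B * ‖x‖ ^ s))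
    (hUK : ∀ x, |laplacian U x| ≤ K) (hVK : ∀ x, |laplacian V x| ≤ K)
    (hU : ∀ x, ‖x‖ < ρ → |laplacian U x| ≤ C * |V x| ^ q)
    (hV : ∀ x, ‖x‖ < ρ → |laplacian V x| ≤ C * |U x| ^ p)
    {A σ : ℝ} (hA : 0 ≤ A) (hσ : 0 ≤ σ) (hf : ∀ x, |V x| ≤ A * ‖x‖ ^ σ) (x : Euc N) :
    |V x| ≤ CN * (1 + p * q) ^ N * (C * (CN ^ p * ((1 + q) ^ N) ^ p * (2 ^ p * (C ^ p + K ^ p))) + K) *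
      (1 + σ) ^ (N + N * p) * (A ^ (p * q) + ρ⁻¹ ^ (p * q * σ)) * ‖x‖ ^ (p * q * σ) := by
  have h1 := half_step hC hK hρ hq hestU hUK hU hA hσ hf
  set A' : ℝ := CN * (1 + q * σ) ^ N * (C * A ^ q + K * ρ⁻¹ ^ (q * σ)) with hA'
  have hA'0 : 0 ≤ A' := by positivity
  have h2 := half_step hC hK hρ hp hestV hVK hV hA'0 (by positivity) h1 x
  rw [← mul_assoc] at h2
  refine h2.trans ?_
  refine mul_le_mul_of_nonneg_right ?_ (by positivity)
  set L : ℝ := ρ⁻¹ ^ (p * q * σ) with hL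
  have hL0 : 0 < L := by positivity
  set S : ℝ := 1 + σ with hS
  have hS1 : 1 ≤ S := by linarith
  have hAp0 : 0 ≤ A ^ (p * q) := by positivity
  have e1 : (1 + q * σ) ^ N ≤ (1 + q) ^ N * S ^ N := by
    rw [← mul_pow]; apply pow_le_pow_left₀ (by positivity); rw [hS]; nlinarith
  have e2 : (1 + p * q * σ) ^ N ≤ (1 + p * q) ^ N * S ^ N := by
    rw [← mul_pow]; apply pow_le_pow_left₀ (by positivity); rw [hS]
    have : 0 < p * q := by positivity
    nlinarith
  have e3 : (C * A ^ q + K * ρ⁻¹ ^ (q * σ)) ^ p ≤ 2 ^ p * ((C ^ p + K ^ p) * (A ^ (p * q) + L)) := by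
    refine (add_rpow_le_two (by positivity) (by positivity) hp.le).trans ?_
    have a1 : (C * A ^ q) ^ p = C ^ p * A ^ (p * q) := by
      rw [Real.mul_rpow hC.le (by positivity), ← Real.rpow_mul hA, mul_comm q]
    have a2 : (K * ρ⁻¹ ^ (q * σ)) ^ p = K ^ p * L := by
      rw [Real.mul_rpow hK.le (by positivity), ← Real.rpow_mul (by positivity), hL]
      congr 2; ring
    rw [a1, a2]
    gcongr
    have : 0 ≤ C ^ p * L := by positivity
    have : 0 ≤ K ^ p * A ^ (p * q) := by positivity
    nlinarith
  have e4 : A' ^ p ≤ CN ^ p * ((1 + q) ^ N) ^ p * (2 ^ p * (C ^ p + K ^ p)) * S ^ (N * p) * (A ^ (p * q) + L) := by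
    rw [hA', Real.mul_rpow (by positivity) (by positivity), Real.mul_rpow hCN.le (by positivity)]
    have b1 : ((1 + q * σ) ^ N) ^ p ≤ ((1 + q) ^ N) ^ p * S ^ (N * p) := by
      refine (Real.rpow_le_rpow (by positivity) e1 hp.le).trans (le_of_eq ?_)
      rw [Real.mul_rpow (by positivity) (by positivity), Real.rpow_mul (by linarith), Real.rpow_natCast]
    calc CN ^ p * ((1 + q * σ) ^ N) ^ p * (C * A ^ q + K * ρ⁻¹ ^ (q * σ)) ^ p
        ≤ CN ^ p * (((1 + q) ^ N) ^ p * S ^ (N * p)) * (2 ^ p * ((C ^ p + K ^ p) * (A ^ (p * q) + L))) := by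
          gcongr
      _ = _ := by ring
  have hSp : 1 ≤ S ^ (N * p) := Real.one_le_rpow hS1 (by positivity)
  have e5 : K * L ≤ K * S ^ (N * p) * (A ^ (p * q) + L) := by
    have : L ≤ S ^ (N * p) * (A ^ (p * q) + L) := by nlinarith
    rw [mul_assoc]; gcongr
  rw [Real.rpow_add (by linarith), Real.rpow_natCast]
  set Q := CN ^ p * ((1 + q) ^ N) ^ p * (2 ^ p * (C ^ p + K ^ p)) with hQ
  have hQ0 : 0 < Q := by positivity
  calc CN * (1 + p * q * σ) ^ N * (C * A' ^ p + K * L)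
      ≤ CN * ((1 + p * q) ^ N * S ^ N) * (C * (Q * S ^ (N * p) * (A ^ (p * q) + L))
        + K * S ^ (N * p) * (A ^ (p * q) + L)) := by
        gcongr
    _ = _ := by ring

/-- If every decay rate `σ` of `f` improves to `θσ` with `θ > 1` and the stated control of constants, then
`f` vanishes on a ball whose radius depends only on the parameters. By induction
`|f x| ≤ D⁻¹ (1+θ^k)^(-b) (Λ|x|)^(θ^k)`. -/
lemma superexp_iteration {θ c M L K : ℝ} (hθ : 1 < θ) (hc : 0 < c) (hM : 0 ≤ M) (hL : 1 ≤ L)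
    (hK : 0 < K) : ∃ δ > 0, ∀ f : Euc N → ℝ, (∀ x, |f x| ≤ K * ‖x‖) →
      (∀ A σ : ℝ, 0 ≤ A → 0 ≤ σ → (∀ x, |f x| ≤ A * ‖x‖ ^ σ) →
        ∀ x, |f x| ≤ c * (1 + σ) ^ M * (A ^ θ + L ^ (θ * σ)) * ‖x‖ ^ (θ * σ)) →
      ∀ x, ‖x‖ < δ → f x = 0 := by
  have hθ0 : 0 < θ - 1 := by linarith
  -- `b` is fixed by `M - bθ = -b`, so that the factor `(1+σ)^(-b)` absorbs the loss `(1+σ)^M`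
  set b : ℝ := M / (θ - 1) with hb
  have hb0 : 0 ≤ b := by positivity
  have hbM : M = b * θ - b := by rw [hb]; field_simp
  -- `D` makes the constant in the main term exactly one half
  set D : ℝ := (2 * c * θ ^ b) ^ (θ - 1)⁻¹ with hD
  have hD0 : 0 < D := by positivity
  have hDθ : D ^ θ = D * (2 * c * θ ^ b) := by
    have : D ^ (θ - 1) = 2 * c * θ ^ b := by
      rw [hD]; exact Real.rpow_inv_rpow (by positivity) hθ0.ne'
    rw [← this, ← Real.rpow_one_add' hD0.le (by linarith)]; congr 1; ring
  -- `G` is large enough both to absorb the term with `L` and to start the induction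
  set E : ℝ := max 1 (2 * c * D * θ ^ b) with hE
  have hE1 : 1 ≤ E := le_max_left _ _
  set G : ℝ := E * 2 ^ (M + b) + K * D * 2 ^ b with hG
  have h2Mb : (1:ℝ) ≤ 2 ^ (M + b) := Real.one_le_rpow (by norm_num) (by positivity)
  have hG1 : E * 2 ^ (M + b) ≤ G := by
    have : 0 ≤ K * D * 2 ^ b := by positivity
    linarith
  have hG2 : K * D * 2 ^ b ≤ G := by
    have : 0 ≤ E * 2 ^ (M + b) := by positivity
    linarith
  have hG1' : 1 ≤ G := by nlinarith
  set Λ : ℝ := L * G with hΛ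
  have hΛ0 : 0 < Λ := by positivity
  refine ⟨Λ⁻¹, by positivity, fun f hf0 hstep x hx => ?_⟩
  have hind : ∀ k : ℕ, ∀ x, |f x| ≤ (D⁻¹ * (1 + θ ^ k) ^ (-b) * Λ ^ (θ ^ k)) * ‖x‖ ^ (θ ^ k) := by
    intro k
    induction k with
    | zero =>
      intro x
      refine (hf0 x).trans ?_
      simp only [pow_zero, Real.rpow_one]
      gcongr
      rw [show (1:ℝ) + 1 = 2 by norm_num, Real.rpow_neg (by norm_num), ← mul_inv, inv_mul_eq_div,
        le_div_iff₀ (by positivity)]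
      calc K * (D * 2 ^ b) = K * D * 2 ^ b := by ring
        _ ≤ G := hG2
        _ ≤ Λ := le_mul_of_one_le_left (by linarith) hL
    | succ k ih =>
      intro x
      set σ : ℝ := θ ^ k with hσ
      have hσ1 : 1 ≤ σ := one_le_pow₀ hθ.le
      have hσθ : θ ^ (k + 1) = θ * σ := by rw [pow_succ, mul_comm]
      rw [hσθ]
      set A : ℝ := D⁻¹ * (1 + σ) ^ (-b) * Λ ^ σ with hA
      have hA0 : 0 ≤ A := by positivity
      refine (hstep A σ hA0 (by linarith) ih x).trans ?_
      refine mul_le_mul_of_nonneg_right ?_ (by positivity)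
      have hT : D⁻¹ * (θ ^ (-b) * (1 + σ) ^ (-b)) * Λ ^ (θ * σ) ≤ D⁻¹ * (1 + θ * σ) ^ (-b) * Λ ^ (θ * σ) := by
        gcongr
        rw [← Real.mul_rpow (by linarith) (by linarith)]
        exact Real.rpow_le_rpow_of_nonpos (by positivity) (by nlinarith) (by linarith)
      refine le_trans ?_ hT
      have hAθ : A ^ θ = (D * (2 * c * θ ^ b))⁻¹ * (1 + σ) ^ (-(b * θ)) * Λ ^ (θ * σ) := by
        rw [hA, Real.mul_rpow (by positivity) (by positivity), Real.mul_rpow (by positivity) (by positivity),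
          ← Real.rpow_mul (by positivity), ← Real.rpow_mul (by positivity), Real.inv_rpow hD0.le, hDθ,
          neg_mul, mul_comm σ θ]
      have hθb : θ ^ (-b) = (θ ^ b)⁻¹ := Real.rpow_neg (by linarith) b
      have hθb0 : 0 < θ ^ b := by positivity
      have hSM : (1 + σ) ^ M * (1 + σ) ^ (-(b * θ)) = (1 + σ) ^ (-b) := by
        rw [← Real.rpow_add (by positivity), hbM]; congr 1; ring
      have p1 : c * (1 + σ) ^ M * A ^ θ = 1 / 2 * (D⁻¹ * (θ ^ (-b) * (1 + σ) ^ (-b)) * Λ ^ (θ * σ)) := by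
        rw [hAθ, hθb, ← hSM]
        field_simp
      have p2 : c * (1 + σ) ^ M * L ^ (θ * σ) ≤ 1 / 2 * (D⁻¹ * (θ ^ (-b) * (1 + σ) ^ (-b)) * Λ ^ (θ * σ)) := by
        have g1 : (1 + σ) ^ (M + b) ≤ (2 ^ (M + b)) ^ σ := by
          rw [← Real.rpow_mul (by norm_num), mul_comm (M + b) σ, Real.rpow_mul (by norm_num)]
          refine Real.rpow_le_rpow (by positivity) ?_ (by positivity)
          have := one_add_mul_self_le_rpow_one_add (s := 1) (by norm_num) hσ1
          norm_num at this
          exact this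
        have g2 : 2 * c * D * θ ^ b * (1 + σ) ^ (M + b) ≤ G ^ (θ * σ) := by
          calc 2 * c * D * θ ^ b * (1 + σ) ^ (M + b) ≤ E ^ σ * (2 ^ (M + b)) ^ σ := by
                gcongr
                exact (le_max_right _ _).trans (Real.self_le_rpow_of_one_le hE1 hσ1)
            _ = (E * 2 ^ (M + b)) ^ σ := (Real.mul_rpow (by positivity) (by positivity)).symm
            _ ≤ G ^ σ := Real.rpow_le_rpow (by positivity) hG1 (by positivity)
            _ ≤ G ^ (θ * σ) := Real.rpow_le_rpow_of_exponent_le hG1' (by nlinarith)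
        have g3 : (1 + σ) ^ (M + b) = (1 + σ) ^ M * (1 + σ) ^ b := Real.rpow_add (by positivity) _ _
        have g4 : (1 + σ) ^ (-b) = ((1 + σ) ^ b)⁻¹ := Real.rpow_neg (by positivity) b
        have hSb0 : 0 < (1 + σ) ^ b := by positivity
        rw [hΛ, Real.mul_rpow (by linarith) (by linarith), hθb, g4]
        rw [g3] at g2
        have hLσ : 0 < L ^ (θ * σ) := by positivity
        calc c * (1 + σ) ^ M * L ^ (θ * σ)
            = 1 / 2 * (D⁻¹ * ((θ ^ b)⁻¹ * ((1 + σ) ^ b)⁻¹)) * L ^ (θ * σ) *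
              (2 * c * D * θ ^ b * ((1 + σ) ^ M * (1 + σ) ^ b)) := by field_simp
          _ ≤ 1 / 2 * (D⁻¹ * ((θ ^ b)⁻¹ * ((1 + σ) ^ b)⁻¹)) * L ^ (θ * σ) * G ^ (θ * σ) := by gcongr
          _ = _ := by ring
      rw [mul_add, p1]
      linarith
  have hlt : Λ * ‖x‖ < 1 := by
    calc Λ * ‖x‖ < Λ * Λ⁻¹ := by gcongr
      _ = 1 := by field_simp
  have hlim : Tendsto (fun k : ℕ => D⁻¹ * (Λ * ‖x‖) ^ (θ ^ k)) atTop (𝓝 (D⁻¹ * 0)) := by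
    apply Tendsto.const_mul
    have h1 := tendsto_rpow_atTop_of_base_lt_one (Λ * ‖x‖) (by have : 0 ≤ Λ * ‖x‖ := by positivity
                                                               linarith) hlt
    exact h1.comp (tendsto_pow_atTop_atTop_of_one_lt hθ)
  have hle : |f x| ≤ D⁻¹ * 0 := by
    refine ge_of_tendsto' hlim fun k => (hind k x).trans ?_
    rw [Real.mul_rpow hΛ0.le (norm_nonneg _)]
    have : (1 + θ ^ k) ^ (-b) ≤ 1 := Real.rpow_le_one_of_one_le_of_nonpos
      (by have : 0 < θ ^ k := by positivity
          linarith) (by linarith)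
    calc D⁻¹ * (1 + θ ^ k) ^ (-b) * Λ ^ (θ ^ k) * ‖x‖ ^ (θ ^ k)
        ≤ D⁻¹ * 1 * Λ ^ (θ ^ k) * ‖x‖ ^ (θ ^ k) := by gcongr
      _ = _ := by ring
  simpa using hle

/-- The vanishing of `V` alone; that of `U` follows by exchanging the roles of the two functions. -/
lemma core_half (hN : 2 ≤ N) {p q C K ρ : ℝ} (hp : 0 < p) (hq : 0 < q) (hpq : 1 < p * q)
    (hC : 0 < C) (hK : 0 < K) (hρ : 0 < ρ) (hρ1 : ρ ≤ 1) :
    ∃ δ > 0, ∀ U V : Euc N → ℝ, ContDiff ℝ 2 U → ContDiff ℝ 2 V → FlatFun U → FlatFun V →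
      (∀ x, |laplacian U x| ≤ K) → (∀ x, |laplacian V x| ≤ K) → (∀ x, |V x| ≤ K * ‖x‖) →
      (∀ x, ‖x‖ < ρ → |laplacian U x| ≤ C * |V x| ^ q) →
      (∀ x, ‖x‖ < ρ → |laplacian V x| ≤ C * |U x| ^ p) →
      ∀ x, ‖x‖ < δ → V x = 0 := by
  obtain ⟨CN, hCN, hest⟩ := pointwise_est hN
  obtain ⟨δ, hδ, h⟩ := superexp_iteration (N := N) (θ := p * q)
    (c := CN * (1 + p * q) ^ N * (C * (CN ^ p * ((1 + q) ^ N) ^ p * (2 ^ p * (C ^ p + K ^ p))) + K))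
    (M := N + N * p) (L := ρ⁻¹) (K := K) hpq (by positivity) (by positivity)
    ((one_le_inv₀ hρ).2 hρ1) hK
  refine ⟨δ, hδ, fun U V hU hV fU fV hUK hVK hVl h1 h2 => h V hVl ?_⟩
  intro A σ hA hσ hf x
  exact double_step hCN hC hK hρ hp hq (hest U hU fU (flat_pd hU fU)) (hest V hV fV (flat_pd hV fV))
    hUK hVK h1 h2 hA hσ hf x

/-- Flat solutions of the system of inequalities vanish on a ball about the origin whose radius `δ`
depends only on `N`, `p`, `q`, `C`, `K` and `ρ`. -/
theorem core (hN : 2 ≤ N) {p q C K ρ : ℝ} (hp : 0 < p) (hq : 0 < q) (hpq : 1 < p * q)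
    (hC : 0 < C) (hK : 0 < K) (hρ : 0 < ρ) (hρ1 : ρ ≤ 1) :
    ∃ δ > 0, ∀ U V : Euc N → ℝ, ContDiff ℝ 2 U → ContDiff ℝ 2 V → FlatFun U → FlatFun V →
      (∀ x, |laplacian U x| ≤ K) → (∀ x, |laplacian V x| ≤ K) →
      (∀ x, |U x| ≤ K * ‖x‖) → (∀ x, |V x| ≤ K * ‖x‖) →
      (∀ x, ‖x‖ < ρ → |laplacian U x| ≤ C * |V x| ^ q) →
      (∀ x, ‖x‖ < ρ → |laplacian V x| ≤ C * |U x| ^ p) →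
      ∀ x, ‖x‖ < δ → U x = 0 ∧ V x = 0 := by
  obtain ⟨δ₁, hδ₁, h₁⟩ := core_half hN hp hq hpq hC hK hρ hρ1
  obtain ⟨δ₂, hδ₂, h₂⟩ := core_half hN hq hp (by linarith [mul_comm p q]) hC hK hρ hρ1
  refine ⟨min δ₁ δ₂, lt_min hδ₁ hδ₂, fun U V hU hV fU fV hUK hVK hUl hVl a b x hx => ⟨?_, ?_⟩⟩
  · exact h₂ V U hV hU fV fU hVK hUK hUl b a x (hx.trans_le (min_le_right _ _))
  · exact h₁ U V hU hV fU fV hUK hVK hVl a b x (hx.trans_le (min_le_left _ _))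
end iteration

/-! ### Infinite-order vanishing, cut-off and connectedness -/

section globalize
variable {N : ℕ}

lemma laplacian_congr {f g : Euc N → ℝ} {x : Euc N} (h : f =ᶠ[𝓝 x] g) :
    laplacian f x = laplacian g x := by
  unfold laplacian
  rw [(h.iteratedFDeriv ℝ 2).eq_of_nhds]

lemma laplacian_translate (f : Euc N → ℝ) (y z : Euc N) :
    laplacian (fun z => f (z + y)) z = laplacian f (z + y) := by
  unfold laplacian
  rw [iteratedFDeriv_comp_add_right]

/-- For a Lipschitz function, integral vanishing of infinite order implies pointwise flatness: if
`|U x| > r^n` then `|U| ≥ r^n / 2` on a ball of radius comparable to `r^n`, which forces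
`∫ |U|^ε ≥ c r^(n(ε+N))`. -/
lemma flat_of_vanishesInfOrder {u U : Euc N → ℝ} {x₀ : Euc N} {K : NNReal}
    (hU : LipschitzWith K U) (huU : u =ᶠ[𝓝 x₀] U) (h : VanishesInfOrder u x₀) :
    Flat fun z => U (z + x₀) := by
  obtain ⟨ε, hε, h⟩ := h
  set K' : ℝ := K + 1 with hK'
  have hK'0 : 0 < K' := by positivity
  have hK'1 : 1 ≤ K' := by rw [hK']; linarith [K.2]
  have hlip : ∀ x y, |U x - U y| ≤ K' * ‖x - y‖ := fun x y => by
    have := hU.norm_sub_le x y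
    rw [Real.norm_eq_abs] at this
    nlinarith [norm_nonneg (x - y)]
  obtain ⟨V1, hV1⟩ : ∃ V1 : ℝ, V1 = volume.real (ball (0 : Euc N) 1) := ⟨_, rfl⟩
  have hV10 : 0 < V1 := by
    rw [hV1, measureReal_def]
    exact ENNReal.toReal_pos (measure_ball_pos _ _ one_pos).ne' measure_ball_lt_top.ne
  have claim : ∀ n : ℕ, 1 ≤ n → ∀ᶠ r : ℝ in 𝓝[>] 0, ∀ z, ‖z‖ ≤ r → |U (z + x₀)| ≤ r ^ n := by
    intro n hn
    set E : ℝ := n * (ε + N) with hE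
    have hn0 : (0:ℝ) < n := by exact_mod_cast hn
    have hE0 : 0 < E := by positivity
    set c : ℝ := (1 / 2) ^ ε * (1 / (2 * K')) ^ N * V1 * (2 ^ E)⁻¹ / 2 with hc
    have hc0 : 0 < c := by positivity
    have ev := (h E hE0).def hc0
    have ev2 : ∀ᶠ R : ℝ in 𝓝[>] 0, ∀ x ∈ ball x₀ R, u x = U x := by
      obtain ⟨d, hd, hball⟩ := Metric.eventually_nhds_iff_ball.1 huU
      filter_upwards [Ioo_mem_nhdsGT hd] with R hR x hx
      exact hball x (ball_subset_ball hR.2.le hx)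
    have htend : Tendsto (fun r : ℝ => 2 * r) (𝓝[>] 0) (𝓝[>] 0) := by
      apply tendsto_nhdsWithin_of_tendsto_nhds_of_eventually_within
      · have : Tendsto (fun r : ℝ => 2 * r) (𝓝 0) (𝓝 (2 * 0)) := tendsto_id.const_mul 2
        rw [mul_zero] at this
        exact this.mono_left nhdsWithin_le_nhds
      · filter_upwards [self_mem_nhdsWithin] with r hr
        have : (0:ℝ) < r := hr
        simpa using this
    filter_upwards [htend.eventually ev, htend.eventually ev2, Ioo_mem_nhdsGT (zero_lt_one' ℝ)]
      with r h1 h2 hr z hz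
    obtain ⟨hr0, hr1⟩ := hr
    by_contra hcon
    push Not at hcon
    set x : Euc N := z + x₀ with hx
    set t : ℝ := r ^ n / (2 * K') with ht
    have hrn : 0 < r ^ n := by positivity
    have hrn1 : r ^ n ≤ r := by simpa using pow_le_pow_of_le_one hr0.le hr1.le hn
    have ht0 : 0 < t := by positivity
    have hKt : K' * t = r ^ n / 2 := by rw [ht]; field_simp
    have htr : t ≤ r := by nlinarith
    have hsub : ball x t ⊆ ball x₀ (2 * r) := by
      apply ball_subset_ball'
      have : dist x x₀ = ‖z‖ := by rw [hx, dist_eq_norm]; simp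
      rw [this]; linarith
    have hcontε : Continuous fun y => |U y| ^ ε :=
      (hU.continuous.abs).rpow_const fun _ => Or.inr hε.le
    have hInt : IntegrableOn (fun y => |U y| ^ ε) (ball x₀ (2 * r)) :=
      (hcontε.continuousOn.integrableOn_compact (isCompact_closedBall x₀ (2 * r))).mono_set
        ball_subset_closedBall
    have hlow : (r ^ n / 2) ^ ε * (t ^ N * V1) ≤ ∫ y in ball x₀ (2 * r), |U y| ^ ε := by
      calc (r ^ n / 2) ^ ε * (t ^ N * V1) = ∫ y in ball x t, (r ^ n / 2) ^ ε := by
            rw [setIntegral_const, volume_real_ball x ht0, hV1, smul_eq_mul, mul_comm]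
        _ ≤ ∫ y in ball x t, |U y| ^ ε := by
            apply setIntegral_mono_on (integrableOn_const measure_ball_lt_top.ne) (hInt.mono_set hsub)
              measurableSet_ball
            intro y hy
            apply Real.rpow_le_rpow (by positivity) _ hε.le
            have hy' : ‖x - y‖ ≤ t := by
              rw [← dist_eq_norm, dist_comm]; exact (mem_ball.1 hy).le
            have := hlip x y
            have h3 : K' * ‖x - y‖ ≤ K' * t := by gcongr
            have h4 : |U x| ≤ |U y| + |U x - U y| := by
              have := abs_add_le (U y) (U x - U y)
              simpa using this
            linarith
        _ ≤ ∫ y in ball x₀ (2 * r), |U y| ^ ε := by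
            apply setIntegral_mono_set hInt
            · exact Eventually.of_forall fun y => by positivity
            · exact hsub.eventuallyLE
    have hup : ∫ y in ball x₀ (2 * r), |U y| ^ ε ≤ c * (2 * r) ^ E := by
      have e : ∫ y in ball x₀ (2 * r), |U y| ^ ε = ∫ y in ball x₀ (2 * r), |u y| ^ ε :=
        setIntegral_congr_fun measurableSet_ball fun y hy => by simp only [h2 y hy]
      rw [e]
      refine (le_abs_self _).trans ?_
      have h5 : (0:ℝ) ≤ (2 * r) ^ E := by positivity
      simpa [Real.norm_eq_abs, abs_of_nonneg h5] using h1
    have e1 : (r ^ n / 2) ^ ε * (t ^ N * V1) = (1 / 2) ^ ε * (1 / (2 * K')) ^ N * V1 * r ^ E := by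
      have a1 : (r ^ n / 2) ^ ε = (r ^ (n * ε)) * (1 / 2) ^ ε := by
        rw [div_eq_mul_one_div, Real.mul_rpow hrn.le (by norm_num), ← Real.rpow_natCast r n,
          ← Real.rpow_mul hr0.le]
      have a2 : t ^ N = r ^ ((n:ℝ) * N) * (1 / (2 * K')) ^ N := by
        rw [ht, div_eq_mul_one_div, mul_pow, Real.rpow_mul hr0.le, Real.rpow_natCast, Real.rpow_natCast]
      have a3 : r ^ E = r ^ (n * ε) * r ^ ((n:ℝ) * N) := by
        rw [← Real.rpow_add hr0, hE, mul_add]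
      rw [a1, a2, a3]; ring
    have e2 : c * (2 * r) ^ E = (1 / 2) ^ ε * (1 / (2 * K')) ^ N * V1 * r ^ E / 2 := by
      rw [Real.mul_rpow (by norm_num) hr0.le, hc]
      have : (0:ℝ) < 2 ^ E := by positivity
      field_simp
    have : 0 < (1 / 2) ^ ε * (1 / (2 * K')) ^ N * V1 * r ^ E := by positivity
    rw [e1] at hlow
    rw [e2] at hup
    linarith
  have hU0 : U x₀ = 0 := by
    have hl : Tendsto (fun r : ℝ => r ^ 1) (𝓝[>] 0) (𝓝 0) := by
      have : Tendsto (fun r : ℝ => r ^ 1) (𝓝 0) (𝓝 (0 ^ 1)) := (continuous_pow 1).tendsto 0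
      rw [pow_one] at this
      exact this.mono_left nhdsWithin_le_nhds
    have : |U x₀| ≤ 0 := by
      refine ge_of_tendsto hl ?_
      filter_upwards [claim 1 le_rfl, self_mem_nhdsWithin] with r hr hr0
      have := hr 0 (by simpa using (le_of_lt hr0))
      simpa using this
    simpa using this
  intro m
  apply IsBigO.of_bound 1
  obtain ⟨d, hd, hsub⟩ := (mem_nhdsGT_iff_exists_Ioo_subset).1 (claim (m + 1) (by omega))
  filter_upwards [ball_mem_nhds (0 : Euc N) (lt_min hd one_pos)] with z hz
  have hz' : ‖z‖ < min d 1 := by simpa using hz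
  rw [Real.norm_eq_abs, Real.norm_of_nonneg (by positivity), one_mul]
  by_cases hz0 : z = 0
  · rw [hz0, zero_add, hU0, abs_zero]; positivity
  have := hsub ⟨norm_pos_iff.2 hz0, hz'.trans_le (min_le_left _ _)⟩ z le_rfl
  exact this.trans (pow_le_pow_of_le_one (norm_nonneg _) (hz'.trans_le (min_le_right _ _)).le (by omega))

lemma flatFun_translate {U : Euc N → ℝ} (hU : Continuous U) {x₁ y : Euc N} {R : ℝ} (hR : R ≤ 1 / 8)
    (hy : ‖y - x₁‖ < R / 4) (hs : ∀ x, R ≤ ‖x - x₁‖ → U x = 0) (hfl : Flat fun z => U (z + y)) :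
    FlatFun fun z => U (z + y) where
  cont := by fun_prop
  supp z hz := by
    apply hs
    have : ‖z‖ ≤ ‖z + y - x₁‖ + ‖y - x₁‖ := by
      have := norm_sub_le (z + y - x₁) (y - x₁)
      simpa using this
    linarith
  flat := hfl

/-- Cut-offs `U`, `V` of `u`, `v` near `x₁`, and a radius `δ`, uniform over centres `y` close to `x₁`, such
that flatness of `U` and `V` at `y` makes `u` and `v` vanish on the ball of radius `δ` about `y`. -/
lemma local_uniform (hN : 2 ≤ N) {Ω : Set (Euc N)} (hΩ : IsOpen Ω) {p q : ℝ} (hp : 0 < p)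
    (hq : 0 < q) (hpq : 1 < p * q) {u v : Euc N → ℝ}
    (hu : ContDiffOn ℝ 2 u Ω) (hv : ContDiffOn ℝ 2 v Ω)
    (hbound : ∀ K : Set (Euc N), IsCompact K → K ⊆ Ω → ∃ C > (0:ℝ), ∀ x ∈ K,
        |laplacian u x| ≤ C * |v x| ^ q ∧ |laplacian v x| ≤ C * |u x| ^ p)
    {x₁ : Euc N} (hx₁ : x₁ ∈ Ω) :
    ∃ (U V : Euc N → ℝ) (L : NNReal) (d δ : ℝ), 0 < d ∧ 0 < δ ∧
      LipschitzWith L U ∧ LipschitzWith L V ∧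
      (∀ x ∈ ball x₁ d, u x = U x ∧ v x = V x) ∧
      ∀ y ∈ ball x₁ d, (Flat fun z => U (z + y)) → (Flat fun z => V (z + y)) →
        ∀ x ∈ ball y δ, u x = 0 ∧ v x = 0 := by
  obtain ⟨R₀, hR₀, hR₀Ω⟩ := Metric.isOpen_iff.1 hΩ x₁ hx₁
  set R : ℝ := min (R₀ / 2) (1 / 8) with hR
  have hR0 : 0 < R := lt_min (by linarith) (by norm_num)
  have hR8 : R ≤ 1 / 8 := min_le_right _ _
  have hRΩ : closedBall x₁ R ⊆ Ω :=
    (closedBall_subset_ball ((min_le_left _ _).trans_lt (by linarith))).trans hR₀Ω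
  let χ : ContDiffBump x₁ := ⟨R / 2, R, by linarith, by linarith⟩
  have cut : ∀ f : Euc N → ℝ, ContDiffOn ℝ 2 f Ω → ∃ F : Euc N → ℝ, ContDiff ℝ 2 F ∧
      (∀ x ∈ ball x₁ (R / 2), f x = F x) ∧ (∀ x, R ≤ ‖x - x₁‖ → F x = 0) := by
    intro f hf
    refine ⟨fun x => χ x * f x, ?_, ?_, ?_⟩
    · rw [contDiff_iff_contDiffAt]
      intro x
      by_cases hx : x ∈ closedBall x₁ R
      · exact χ.contDiffAt.mul (hf.contDiffAt (hΩ.mem_nhds (hRΩ hx)))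
      · have : (fun x => χ x * f x) =ᶠ[𝓝 x] fun _ => (0:ℝ) := by
          filter_upwards [isClosed_closedBall.isOpen_compl.mem_nhds hx] with z hz
          have : χ z = 0 := χ.zero_of_le_dist (by
            rw [mem_compl_iff, mem_closedBall] at hz
            exact (not_le.1 hz).le)
          simp [this]
        exact contDiffAt_const.congr_of_eventuallyEq this
    · intro x hx
      simp only [χ.one_of_mem_closedBall (ball_subset_closedBall hx), one_mul]
    · intro x hx
      have : χ x = 0 := χ.zero_of_le_dist (by rwa [dist_eq_norm])
      simp [this]
  have prep : ∀ F : Euc N → ℝ, ContDiff ℝ 2 F → (∀ x, R ≤ ‖x - x₁‖ → F x = 0) →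
      ∃ (L : NNReal) (K : ℝ), LipschitzWith L F ∧ ∀ x, |laplacian F x| ≤ K := by
    intro F hF hs
    have hcs : HasCompactSupport F := by
      apply HasCompactSupport.of_support_subset_isCompact (isCompact_closedBall x₁ R)
      intro y hy
      by_contra hy'
      exact hy (hs y (by rw [mem_closedBall, dist_eq_norm] at hy'; linarith))
    obtain ⟨L, hL⟩ := hF.lipschitzWith_of_hasCompactSupport hcs (by norm_num)
    have hlc : HasCompactSupport (laplacian F) := by
      apply HasCompactSupport.of_support_subset_isCompact (isCompact_closedBall x₁ R)
      intro y hy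
      by_contra hy'
      apply hy
      have : F =ᶠ[𝓝 y] fun _ => (0:ℝ) := by
        filter_upwards [isClosed_closedBall.isOpen_compl.mem_nhds hy'] with z hz
        exact hs z (by rw [mem_compl_iff, mem_closedBall, dist_eq_norm] at hz; linarith)
      rw [laplacian_congr this, laplacian_eq_sum]
      simp [pd2]
    obtain ⟨K, hK⟩ := hlc.exists_bound_of_continuous (continuous_laplacian hF)
    exact ⟨L, K, hL, hK⟩
  obtain ⟨U, hU, huU, hUs⟩ := cut u hu
  obtain ⟨V, hV, hvV, hVs⟩ := cut v hv
  obtain ⟨L₁, K₁, hL₁, hK₁⟩ := prep U hU hUs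
  obtain ⟨L₂, K₂, hL₂, hK₂⟩ := prep V hV hVs
  obtain ⟨C, hC, hCb⟩ := hbound _ (isCompact_closedBall x₁ R) hRΩ
  set K : ℝ := |K₁| + |K₂| + L₁ + L₂ + 1 with hK
  have hKpos : 0 < K := by positivity
  obtain ⟨δ, hδ, hcore⟩ := core hN hp hq hpq hC hKpos (ρ := R / 4) (by positivity) (by linarith)
  refine ⟨U, V, max L₁ L₂, R / 4, min δ (R / 4), by positivity, lt_min hδ (by positivity),
    hL₁.weaken (le_max_left _ _), hL₂.weaken (le_max_right _ _), ?_, ?_⟩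
  · intro x hx
    have := ball_subset_ball (by linarith : R / 4 ≤ R / 2) hx
    exact ⟨huU x this, hvV x this⟩
  intro y hy hfU hfV x hx
  have hy' : ‖y - x₁‖ < R / 4 := by rwa [← dist_eq_norm]
  have fU := flatFun_translate hU.continuous hR8 hy' hUs hfU
  have fV := flatFun_translate hV.continuous hR8 hy' hVs hfV
  have hzero : ∀ {F : Euc N → ℝ}, (FlatFun fun z => F (z + y)) → F y = 0 := by
    intro F hF
    obtain ⟨c, _, hc⟩ := hF.bound 1
    simpa using hc 0
  have hmem : ∀ z : Euc N, ‖z‖ < R / 4 → z + y ∈ ball x₁ (R / 2) := by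
    intro z hz
    rw [mem_ball, dist_eq_norm, add_sub_assoc]
    exact (norm_add_le _ _).trans_lt (by linarith)
  have hlipb : ∀ {F : Euc N → ℝ} {L : NNReal}, LipschitzWith L F → (L : ℝ) ≤ K →
      (FlatFun fun z => F (z + y)) → ∀ z, |F (z + y)| ≤ K * ‖z‖ := by
    intro F L hL hLK hF z
    have := hL.norm_sub_le (z + y) y
    rw [hzero hF, sub_zero, add_sub_cancel_right, Real.norm_eq_abs] at this
    exact this.trans (by gcongr)
  have hcongr : ∀ {f F : Euc N → ℝ}, (∀ x ∈ ball x₁ (R / 2), f x = F x) → ∀ z : Euc N, ‖z‖ < R / 4 →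
      laplacian F (z + y) = laplacian f (z + y) := by
    intro f F hfF z hz
    apply laplacian_congr
    filter_upwards [isOpen_ball.mem_nhds (hmem z hz)] with x hx using (hfF x hx).symm
  have hcl : ball x₁ (R / 2) ⊆ closedBall x₁ R :=
    (ball_subset_closedBall).trans (closedBall_subset_closedBall (by linarith))
  have hL₁0 : (0:ℝ) ≤ L₁ := L₁.2
  have hL₂0 : (0:ℝ) ≤ L₂ := L₂.2
  have key := hcore (fun z => U (z + y)) (fun z => V (z + y)) (hU.comp (contDiff_id.add contDiff_const))
    (hV.comp (contDiff_id.add contDiff_const)) fU fV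
    (fun z => by
      rw [laplacian_translate]
      have := hK₁ (z + y)
      linarith [le_abs_self K₁, abs_nonneg K₂])
    (fun z => by
      rw [laplacian_translate]
      have := hK₂ (z + y)
      linarith [le_abs_self K₂, abs_nonneg K₁])
    (hlipb hL₁ (by linarith [abs_nonneg K₁, abs_nonneg K₂]) fU)
    (hlipb hL₂ (by linarith [abs_nonneg K₁, abs_nonneg K₂]) fV)
    (fun z hz => by
      rw [laplacian_translate, hcongr huU z hz, ← hvV _ (hmem z hz)]
      exact (hCb _ (hcl (hmem z hz))).1)
    (fun z hz => by
      rw [laplacian_translate, hcongr hvV z hz, ← huU _ (hmem z hz)]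
      exact (hCb _ (hcl (hmem z hz))).2)
  have hxy : ‖x - y‖ < min δ (R / 4) := by rwa [← dist_eq_norm]
  have hxm := hmem (x - y) (hxy.trans_le (min_le_right _ _))
  have := key (x - y) (hxy.trans_le (min_le_left _ _))
  simp only [sub_add_cancel] at this hxm
  rw [huU x hxm, hvV x hxm]
  exact this

end globalize

theorem ucp_general {N : ℕ} (hN : 2 ≤ N) {Ω : Set (EuclideanSpace ℝ (Fin N))}
    (hΩopen : IsOpen Ω) (hΩconn : IsConnected Ω)
    {p q : ℝ} (hp : 0 < p) (hq : 0 < q) (hpq : 1 < p * q)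
    {u v : EuclideanSpace ℝ (Fin N) → ℝ}
    (hu : ContDiffOn ℝ 2 u Ω) (hv : ContDiffOn ℝ 2 v Ω)
    (hbound : ∀ K : Set (EuclideanSpace ℝ (Fin N)), IsCompact K → K ⊆ Ω →
      ∃ C > (0:ℝ), ∀ x ∈ K,
        |laplacian u x| ≤ C * |v x| ^ q ∧ |laplacian v x| ≤ C * |u x| ^ p)
    {x₀ : EuclideanSpace ℝ (Fin N)} (hx₀ : x₀ ∈ Ω)
    (hu0 : VanishesInfOrder u x₀) (hv0 : VanishesInfOrder v x₀) :
    ∀ x ∈ Ω, u x = 0 ∧ v x = 0 := by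
  -- the set of points near which both functions vanish
  set Z : Set (Euc N) := {x | ∀ᶠ z in 𝓝 x, u z = 0 ∧ v z = 0} with hZ
  have hZo : IsOpen Z := isOpen_setOfPred_eventually_nhds
  have hne : (Ω ∩ Z).Nonempty := by
    obtain ⟨U, V, L, d, δ, hd, hδ, hLU, hLV, heq, hloc⟩ :=
      local_uniform hN hΩopen hp hq hpq hu hv hbound hx₀
    refine ⟨x₀, hx₀, ?_⟩
    have h1 : u =ᶠ[𝓝 x₀] U := by
      filter_upwards [ball_mem_nhds x₀ hd] with x hx using (heq x hx).1
    have h2 : v =ᶠ[𝓝 x₀] V := by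
      filter_upwards [ball_mem_nhds x₀ hd] with x hx using (heq x hx).2
    filter_upwards [ball_mem_nhds x₀ hδ] with x hx
    exact hloc x₀ (mem_ball_self hd) (flat_of_vanishesInfOrder hLU h1 hu0)
      (flat_of_vanishesInfOrder hLV h2 hv0) x hx
  have hcl : closure Z ∩ Ω ⊆ Z := by
    rintro x₁ ⟨hx₁Z, hx₁⟩
    obtain ⟨U, V, L, d, δ, hd, hδ, hLU, hLV, heq, hloc⟩ :=
      local_uniform hN hΩopen hp hq hpq hu hv hbound hx₁
    obtain ⟨y, hyZ, hy⟩ := Metric.mem_closure_iff.1 hx₁Z (min d δ) (lt_min hd hδ)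
    have hyd : y ∈ ball x₁ d := by
      rw [mem_ball, dist_comm]; exact hy.trans_le (min_le_left _ _)
    have hflat : ∀ {f F : Euc N → ℝ}, (∀ x ∈ ball x₁ d, f x = F x) → (∀ᶠ z in 𝓝 y, f z = 0) →
        Flat fun z => F (z + y) := by
      intro f F hfF hf m
      have h0 : ∀ᶠ x in 𝓝 y, F x = 0 := by
        filter_upwards [hf, isOpen_ball.mem_nhds hyd] with x h1 h2
        rw [← hfF x h2, h1]
      have ht : Tendsto (fun z : Euc N => z + y) (𝓝 0) (𝓝 y) := by
        have : Tendsto (fun z : Euc N => z + y) (𝓝 0) (𝓝 (0 + y)) :=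
          (continuous_id.add continuous_const).tendsto 0
        rwa [zero_add] at this
      apply IsBigO.of_bound 1
      filter_upwards [ht.eventually h0] with z hz
      rw [hz]; simp
    have hyZ' : ∀ᶠ z in 𝓝 y, u z = 0 ∧ v z = 0 := hyZ
    have hz := hloc y hyd (hflat (fun x hx => (heq x hx).1) (hyZ'.mono fun _ h => h.1))
      (hflat (fun x hx => (heq x hx).2) (hyZ'.mono fun _ h => h.2))
    have hx₁y : x₁ ∈ ball y δ := mem_ball.2 (hy.trans_le (min_le_right _ _))
    exact Filter.mem_of_superset (isOpen_ball.mem_nhds hx₁y) hz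
  intro x hx
  have := hΩconn.isPreconnected.subset_of_closure_inter_subset hZo hne hcl hx
  exact this.self_of_nhds
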